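/- arXiv:1104.1231 — 4 statements merged into one kernel-verified Lean document; each statement's English description precedes it below -/
import Mathlib

section
/- Let G be the free product ℤ * ℤ₃, where ℤ = ⟨t⟩ and ℤ₃ = ⟨u⟩ is cyclic of order 3, and let S = {t, u}. Then the Cayley graph Cay(G;S) has no regular spanning tree: every spanning subgraph of Cay(G;S) that is a tree has two adjacent vertices of different degrees. -/
open scoped Pointwise

/-- The (right) Cayley graph of a group w.r.t. a set `S`: `g` and `gs` are adjacent
for `s ∈ S ∪ S⁻¹`. -/
def cayleyGraph {G : Type*} [Group G] (S : Set G) : SimpleGraph G :=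
  SimpleGraph.fromRel (fun g h => g⁻¹ * h ∈ S ∪ S⁻¹)

/-- The free product `ℤ * ℤ₃`. -/
abbrev FreeProdZZ3 : Type := Monoid.Coprod (Multiplicative ℤ) (Multiplicative (ZMod 3))

/-- The generator `t` of the `ℤ` factor. -/
noncomputable def tGen : FreeProdZZ3 := Monoid.Coprod.inl (Multiplicative.ofAdd (1 : ℤ))

/-- The generator `u` of the `ℤ₃` factor. -/
noncomputable def uGen : FreeProdZZ3 :=
  Monoid.Coprod.inr (Multiplicative.ofAdd (1 : ZMod 3))

/-!
Label the edges of a Cayley graph of a free product `M ∗ N` inside the left cosets of `M` by the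
differences of a function `p`, and those inside the left cosets of `N` by the differences of `q`.
Since `M ∗ N` has no relations between its factors, these labels are the differences of a single
function. Hence no path can leave a coset of a factor and return to it at another vertex: a
connected spanning subgraph `T` stays connected on every coset of either factor.

For `ℤ ∗ ℤ₃` this means that `T` contains every `t`-edge and at least two edges of every
`u`-triangle. If `T` is not the whole Cayley graph, some triangle loses exactly one edge; its apex
keeps its full degree `4`, while the endpoints of the lost edge drop to degree `3`.
-/

section CayleyGraph

variable {G : Type*} [Group G] {S : Set G} {T : SimpleGraph G}

lemma cayleyGraph_eq_mulCayley (S : Set G) : cayleyGraph S = SimpleGraph.mulCayley S := by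
  ext g h
  simp only [cayleyGraph, SimpleGraph.fromRel_adj, SimpleGraph.mulCayley_adj, Set.mem_union,
    Set.mem_inv, mul_inv_rev, inv_inv]
  tauto

lemma cayleyGraph_adj {g h : G} : (cayleyGraph S).Adj g h ↔ g ≠ h ∧ g⁻¹ * h ∈ S ∪ S⁻¹ := by
  rw [cayleyGraph_eq_mulCayley, SimpleGraph.mulCayley_adj, Set.mem_union, Set.mem_inv, mul_inv_rev,
    inv_inv]

lemma cayleyGraph_adj_mul_right {s : G} (hs : s ∈ S) (hs_one : s ≠ 1) (g : G) :
    (cayleyGraph S).Adj g (g * s) := by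
  rw [cayleyGraph_adj, inv_mul_cancel_left]
  exact ⟨(mul_ne_left.2 hs_one).symm, .inl hs⟩

lemma neighborSet_cayleyGraph (S : Set G) (g : G) :
    (cayleyGraph S).neighborSet g = g • ((S ∪ S⁻¹) \ {1}) := by
  ext h
  rw [SimpleGraph.mem_neighborSet, cayleyGraph_adj, Set.mem_smul_set_iff_inv_smul_mem, smul_eq_mul,
    Set.mem_sdiff, Set.mem_singleton_iff, inv_mul_eq_one, and_comm]

lemma finite_neighborSet_cayleyGraph (hS : S.Finite) (g : G) :
    ((cayleyGraph S).neighborSet g).Finite := by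
  rw [neighborSet_cayleyGraph]
  exact ((hS.union hS.inv).subset Set.sdiff_subset).smul_set

lemma encard_neighborSet_cayleyGraph_eq (S : Set G) (g h : G) :
    ((cayleyGraph S).neighborSet g).encard = ((cayleyGraph S).neighborSet h).encard := by
  simp only [neighborSet_cayleyGraph, Set.encard_smul_set]

lemma encard_neighborSet_lt_of_le_cayleyGraph (hS : S.Finite) (hT : T ≤ cayleyGraph S) {v w x : G}
    (hv : (cayleyGraph S).neighborSet v ⊆ T.neighborSet v)
    (hwx : (cayleyGraph S).Adj w x) (hwx' : ¬ T.Adj w x) :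
    (T.neighborSet w).encard < (T.neighborSet v).encard := by
  have hw : T.neighborSet w ⊂ (cayleyGraph S).neighborSet w :=
    (Set.ssubset_iff_of_subset fun _ h ↦ hT h).2 ⟨x, hwx, hwx'⟩
  have hfin : (T.neighborSet w).Finite := (finite_neighborSet_cayleyGraph hS w).subset hw.subset
  calc (T.neighborSet w).encard
      < ((cayleyGraph S).neighborSet w).encard := hfin.encard_lt_encard hw
    _ = ((cayleyGraph S).neighborSet v).encard := encard_neighborSet_cayleyGraph_eq S w v
    _ ≤ (T.neighborSet v).encard := Set.encard_le_encard hv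

lemma eq_of_preconnected_of_le_cayleyGraph (hT : T ≤ cayleyGraph S) (hconn : T.Preconnected)
    {X : Type*} {f : G → X} (hf : ∀ g, ∀ s ∈ S, T.Adj g (g * s) → f (g * s) = f g) (v w : G) :
    f v = f w := by
  have hadj {v w : G} (h : T.Adj v w) : f v = f w := by
    have hcayley := hT h
    rw [cayleyGraph_eq_mulCayley, SimpleGraph.mulCayley_adj'] at hcayley
    obtain ⟨-, s, hs, rfl | rfl⟩ := hcayley
    · exact (hf v s hs h).symm
    · exact hf w s hs h.symm
  obtain ⟨walk⟩ := hconn v w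
  induction walk with
  | nil => rfl
  | cons h _ ih => exact (hadj h).trans ih

end CayleyGraph

section FreeProduct

open Monoid.Coprod

variable {M N : Type*} [Group M] [Group N] {S₁ : Set M} {S₂ : Set N} {T : SimpleGraph (M ∗ N)}

lemma exists_inv_mul_eq_on_cosets {A : Type*} [Group A] (p q : M ∗ N → A) :
    ∃ f : M ∗ N → A,
      (∀ g m, (f g)⁻¹ * f (g * inl m) = (p g)⁻¹ * p (g * inl m)) ∧
      ∀ g n, (f g)⁻¹ * f (g * inr n) = (q g)⁻¹ * q (g * inr n) := by
  -- Sections of `A ≀ᵣ G → G` correspond to labelings of the pairs `(g, g * x)` by differences of a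
  -- function, and a section over `G = M ∗ N` can be chosen freely on the two factors.
  let shear (p : M ∗ N → A) : A ≀ᵣ (M ∗ N) := ⟨fun g ↦ p g⁻¹, 1⟩
  let diff (p : M ∗ N → A) : M ∗ N →* A ≀ᵣ (M ∗ N) :=
    (MulAut.conj (shear p)⁻¹).toMonoidHom.comp RegularWreathProduct.inl
  have left_diff (p g x) : (diff p x).left g⁻¹ = (p g)⁻¹ * p (g * x) := by simp [diff, shear]
  let φ : M ∗ N →* A ≀ᵣ (M ∗ N) := lift ((diff p).comp inl) ((diff q).comp inr)
  have right_φ (g) : (φ g).right = g := by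
    have hsection : RegularWreathProduct.rightHom.comp φ = MonoidHom.id (M ∗ N) := by
      ext <;> simp [φ, diff, shear]
    exact DFunLike.congr_fun hsection g
  have diff_left_φ (g x) : ((φ g).left 1)⁻¹ * (φ (g * x)).left 1 = (φ x).left g⁻¹ := by
    simp [right_φ]
  refine ⟨fun g ↦ (φ g).left 1, fun g m ↦ ?_, fun g n ↦ ?_⟩
  · rw [diff_left_φ, ← left_diff, lift_apply_inl, MonoidHom.comp_apply]
  · rw [diff_left_φ, ← left_diff, lift_apply_inr, MonoidHom.comp_apply]

lemma apply_mul_inl_eq_of_preconnected (hT : T ≤ cayleyGraph (inl '' S₁ ∪ inr '' S₂))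
    (hconn : T.Preconnected) {X : Type*} {p : M ∗ N → X}
    (hp : ∀ g, ∀ m ∈ S₁, T.Adj g (g * inl m) → p (g * inl m) = p g) (g : M ∗ N) (m : M) :
    p (g * inl m) = p g := by
  -- Embedding `X` in a free group lets values of `p` be subtracted.
  obtain ⟨f, hf₁, hf₂⟩ := exists_inv_mul_eq_on_cosets (FreeGroup.of ∘ p) 1
  have hf (g h : M ∗ N) : f g = f h := by
    refine eq_of_preconnected_of_le_cayleyGraph hT hconn ?_ g h
    rintro g _ (⟨m, hm, rfl⟩ | ⟨n, -, rfl⟩) hadj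
    · simpa [hp g m hm hadj, inv_mul_eq_one, eq_comm (a := f g)] using hf₁ g m
    · simpa [inv_mul_eq_one, eq_comm (a := f g)] using hf₂ g n
  have hdiff := hf₁ g m
  rw [hf g, inv_mul_cancel, eq_comm, inv_mul_eq_one] at hdiff
  exact (FreeGroup.of_injective hdiff).symm

lemma apply_mul_inr_eq_of_preconnected (hT : T ≤ cayleyGraph (inl '' S₁ ∪ inr '' S₂))
    (hconn : T.Preconnected) {X : Type*} {q : M ∗ N → X}
    (hq : ∀ g, ∀ n ∈ S₂, T.Adj g (g * inr n) → q (g * inr n) = q g) (g : M ∗ N) (n : N) :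
    q (g * inr n) = q g := by
  obtain ⟨f, hf₁, hf₂⟩ := exists_inv_mul_eq_on_cosets 1 (FreeGroup.of ∘ q)
  have hf (g h : M ∗ N) : f g = f h := by
    refine eq_of_preconnected_of_le_cayleyGraph hT hconn ?_ g h
    rintro g _ (⟨m, -, rfl⟩ | ⟨n, hn, rfl⟩) hadj
    · simpa [inv_mul_eq_one, eq_comm (a := f g)] using hf₁ g m
    · simpa [hq g n hn hadj, inv_mul_eq_one, eq_comm (a := f g)] using hf₂ g n
  have hdiff := hf₂ g n
  rw [hf g, inv_mul_cancel, eq_comm, inv_mul_eq_one] at hdiff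
  exact (FreeGroup.of_injective hdiff).symm

lemma exists_adj_mul_inr_of_preconnected [Nontrivial N]
    (hT : T ≤ cayleyGraph (inl '' S₁ ∪ inr '' S₂)) (hconn : T.Preconnected) (g : M ∗ N) :
    ∃ n ∈ S₂ ∪ S₂⁻¹, T.Adj g (g * inr n) := by
  by_contra! hisolated
  obtain ⟨n, hn⟩ := exists_ne (1 : N)
  have hg : (g * inr n = g) = (g = g) := by
    refine apply_mul_inr_eq_of_preconnected hT hconn (q := (· = g)) (fun h s hs hadj ↦ ?_) g n
    have hh : h ≠ g := by
      rintro rfl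
      exact hisolated s (.inl hs) hadj
    have hhs : h * inr s ≠ g := by
      rintro rfl
      exact hisolated s⁻¹ (.inr (Set.inv_mem_inv.2 hs)) (by simpa using hadj.symm)
    simp only [hh, hhs]
  have hinr : inr n = (1 : M ∗ N) := by simpa using hg
  exact hn (inr_injective (hinr.trans (map_one inr).symm))

lemma adj_mul_inl_ofAdd_one_of_preconnected {T : SimpleGraph (Multiplicative ℤ ∗ N)}
    (hT : T ≤ cayleyGraph (inl '' {.ofAdd 1} ∪ inr '' S₂)) (hconn : T.Preconnected)
    (g : Multiplicative ℤ ∗ N) : T.Adj g (g * inl (.ofAdd 1)) := by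
  by_contra hmissing
  let ahead (h : Multiplicative ℤ ∗ N) : Prop := ∃ k : ℤ, 0 < k ∧ h = g * inl (.ofAdd k)
  have hahead : ahead (g * inl (.ofAdd 1)) = ahead g := by
    refine apply_mul_inl_eq_of_preconnected hT hconn ?_ g _
    rintro h _ rfl hadj
    refine propext ⟨fun ⟨k, hk, hh⟩ ↦ ⟨k - 1, ?_, ?_⟩, fun ⟨k, hk, hh⟩ ↦ ⟨k + 1, by lia, ?_⟩⟩
    · have hk_ne_one : k ≠ 1 := by
        rintro rfl
        exact hmissing (mul_right_cancel hh ▸ hadj)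
      lia
    · rw [ofAdd_sub, map_div, ← mul_div_assoc, ← hh, mul_div_cancel_right]
    · rw [hh, ofAdd_add, map_mul, mul_assoc]
  obtain ⟨k, hk, hg⟩ : ahead g := hahead ▸ ⟨1, one_pos, rfl⟩
  have hk_zero : Multiplicative.ofAdd k = 1 :=
    inl_injective ((left_eq_mul.1 hg).trans (map_one inl).symm)
  exact hk.ne' hk_zero

end FreeProduct

section FreeProdZZ3

variable {T : SimpleGraph FreeProdZZ3}

lemma pair_tGen_uGen : ({tGen, uGen} : Set FreeProdZZ3) =
    Monoid.Coprod.inl '' {.ofAdd 1} ∪ Monoid.Coprod.inr '' {.ofAdd 1} := by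
  rw [Set.image_singleton, Set.image_singleton, Set.singleton_union, tGen, uGen]

lemma uGen_mul_self : uGen * uGen = uGen⁻¹ := by
  rw [uGen, ← map_mul, ← map_inv]
  congr 1

lemma uGen_ne_one : uGen ≠ 1 := by
  rw [uGen, ← map_one Monoid.Coprod.inr, Monoid.Coprod.inr_injective.ne_iff]
  decide

lemma adj_mul_tGen (hT : T ≤ cayleyGraph {tGen, uGen}) (hconn : T.Preconnected) (g : FreeProdZZ3) :
    T.Adj g (g * tGen) := by
  rw [pair_tGen_uGen] at hT
  exact adj_mul_inl_ofAdd_one_of_preconnected hT hconn g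

lemma adj_mul_uGen_or_adj_mul_inv_uGen (hT : T ≤ cayleyGraph {tGen, uGen}) (hconn : T.Preconnected)
    (g : FreeProdZZ3) : T.Adj g (g * uGen) ∨ T.Adj g (g * uGen⁻¹) := by
  rw [pair_tGen_uGen] at hT
  obtain ⟨n, hn, hadj⟩ := exists_adj_mul_inr_of_preconnected hT hconn g
  rw [Set.inv_singleton] at hn
  obtain rfl | rfl := hn
  · exact .inl hadj
  · exact .inr (by rwa [uGen, ← map_inv])

lemma not_cliqueFree_three_cayleyGraph :
    ¬ (cayleyGraph ({tGen, uGen} : Set FreeProdZZ3)).CliqueFree 3 := by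
  classical
  have hadj := cayleyGraph_adj_mul_right (S := {tGen, uGen}) (.inr rfl) uGen_ne_one
  have h₁ := hadj 1
  have h₂ := hadj uGen
  have h₃ := hadj uGen⁻¹
  rw [one_mul] at h₁
  rw [uGen_mul_self] at h₂
  rw [inv_mul_cancel] at h₃
  intro hfree
  exact hfree {1, uGen, uGen⁻¹} (SimpleGraph.is3Clique_triple_iff.2 ⟨h₁, h₃.symm, h₂⟩)

theorem no_regular_spanning_tree_in_Z_free_prod_Z3_general
    (hT : T < cayleyGraph ({tGen, uGen} : Set FreeProdZZ3)) (hconn : T.Connected) :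
    ∃ v w : FreeProdZZ3, T.Adj v w ∧
      (T.neighborSet v).encard ≠ (T.neighborSet w).encard := by
  have ht := adj_mul_tGen hT.le hconn.preconnected
  have hu := adj_mul_uGen_or_adj_mul_inv_uGen hT.le hconn.preconnected
  obtain ⟨g, hg⟩ : ∃ g, ¬ T.Adj g (g * uGen) := by
    by_contra! hu_all
    refine hT.not_ge ?_
    rw [cayleyGraph_eq_mulCayley, SimpleGraph.mulCayley_le_iff]
    rintro s (rfl | rfl) g -
    exacts [(ht g).symm, (hu_all g).symm]
  have hapex : T.Adj g (g * uGen⁻¹) := (hu g).resolve_left hg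
  have hapex' : T.Adj (g * uGen) (g * uGen⁻¹) := by
    have hgu := hu (g * uGen)
    rw [mul_assoc, uGen_mul_self, mul_inv_cancel_right, T.adj_comm _ g] at hgu
    exact hgu.resolve_right hg
  have hfull : (cayleyGraph {tGen, uGen}).neighborSet (g * uGen⁻¹) ⊆
      T.neighborSet (g * uGen⁻¹) := by
    intro x hx
    rw [SimpleGraph.mem_neighborSet, cayleyGraph_eq_mulCayley, SimpleGraph.mulCayley_adj'] at hx
    obtain ⟨-, s, rfl | rfl, rfl | hx⟩ := hx
    · exact ht _
    · exact hx ▸ (ht x).symm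
    · simpa using hapex.symm
    · rw [← uGen_mul_self, ← mul_assoc, mul_left_inj] at hx
      exact hx ▸ hapex'.symm
  have hlt := encard_neighborSet_lt_of_le_cayleyGraph (Set.toFinite _) hT.le hfull
    (cayleyGraph_adj_mul_right (.inr rfl) uGen_ne_one g) hg
  exact ⟨g, g * uGen⁻¹, hapex, hlt.ne⟩

end FreeProdZZ3

/-- The Cayley graph of `ℤ * ℤ₃` with respect to `S = {t, u}` has no regular spanning
tree: every spanning subgraph which is a tree has two adjacent vertices of different
degrees. -/
theorem no_regular_spanning_tree_in_Z_free_prod_Z3 :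
    ∀ T : SimpleGraph FreeProdZZ3,
      T ≤ cayleyGraph ({tGen, uGen} : Set FreeProdZZ3) → T.IsTree →
      ∃ v w : FreeProdZZ3, T.Adj v w ∧
        (T.neighborSet v).encard ≠ (T.neighborSet w).encard := by
  intro T hT htree
  have hne : T ≠ cayleyGraph {tGen, uGen} := by
    rintro rfl
    exact not_cliqueFree_three_cayleyGraph (htree.isAcyclic.cliqueFree le_rfl)
  exact no_regular_spanning_tree_in_Z_free_prod_Z3_general (hT.lt_of_ne hne) htree.connected
end

section
/- Every finitely generated group is poly-ccc; that is, every finitely generated group admits a centered, cofinal, coherent sequence of fair polytilings. -/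
open scoped Pointwise

/-- A polytiling of a group `G`: finite tiles `T 0, …, T (k-1)`, each containing `1`,
together with nonempty center sets `Δ i`, such that the translates `δ • T i`
(`δ ∈ Δ i`) partition `G`. -/
structure Polytiling (G : Type*) [Group G] where
  k : ℕ
  k_pos : 0 < k
  T : Fin k → Finset G
  Δ : Fin k → Set G
  one_mem : ∀ i, (1 : G) ∈ T i
  delta_nonempty : ∀ i, (Δ i).Nonempty
  covers : ∀ g : G, ∃ i : Fin k, ∃ δ ∈ Δ i, g ∈ δ • (T i : Set G)
  disj : ∀ (i j : Fin k), ∀ δ ∈ Δ i, ∀ δ' ∈ Δ j, (i, δ) ≠ (j, δ') →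
    Disjoint (δ • (T i : Set G)) (δ' • (T j : Set G))

/-- A polytiling is fair if all tiles have the same cardinality. -/
def Polytiling.Fair {G : Type*} [Group G] (P : Polytiling G) : Prop :=
  ∀ i j, (P.T i).card = (P.T j).card

/-- The first index of a polytiling. -/
def Polytiling.fst {G : Type*} [Group G] (P : Polytiling G) : Fin P.k := ⟨0, P.k_pos⟩

/-- The pieces of the partition of `G` induced by a polytiling. -/
def Polytiling.pieces {G : Type*} [Group G] (P : Polytiling G) : Set (Set G) :=
  {A : Set G | ∃ i : Fin P.k, ∃ δ ∈ P.Δ i, A = δ • (P.T i : Set G)}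

/-!
A partition of `G` into classes of one cardinality is induced by a fair polytiling as soon as
`g⁻¹ * h` takes only finitely many values on equivalent pairs `(g, h)`, for then the classes have
finitely many shapes up to left translation. So it suffices to coarsen the partition into
singletons step by step, each time making a prescribed element `a` equivalent to `1`.

Let `B` be the set of values of `g⁻¹ * h` for the current partition and let `H` be the subgroup
generated by `a` and `B`, so that every class lies in a left coset of `H`. If `H` is finite, pass to
the left cosets of `H`. If `H` is infinite, its Cayley graph induces on the set of classes a locally
finite graph without finite components. The square of such a graph has a perfect matching: finite
sets of vertices can be covered one vertex at a time, moving the defect out of the set, and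
compactness does the rest. Conjugating by a transposition matches the class of `1` with that of `a`,
and merging matched classes doubles the size of every class.
-/

section

open Function Relation

/-- A matching of the square of the graph `E` (a reflexive symmetric relation), encoded as the
involution `τ` that exchanges matched vertices and fixes unmatched ones. It covers `F`, and a
vertex outside `F` can only be matched along an edge of `E` itself, to a vertex of `F`. -/
structure IsSquareMatching {V : Type*} (E : V → V → Prop) (F : Set V) (τ : V → V) : Prop where
  involutive : Involutive τ
  comp_apply : ∀ v, Comp E E v (τ v)
  apply_ne : ∀ v ∈ F, τ v ≠ v
  rel_apply : ∀ v ∉ F, E v (τ v)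
  apply_mem : ∀ v ∉ F, τ v ≠ v → τ v ∈ F

namespace IsSquareMatching

variable {V : Type*} {E : V → V → Prop} {F : Set V} {τ : V → V} {x u : V}

theorem id_empty (hrefl : ∀ v, E v v) : IsSquareMatching E ∅ id where
  involutive _ := rfl
  comp_apply v := ⟨v, hrefl v, hrefl v⟩
  apply_ne _ hv := hv.elim
  rel_apply v _ := hrefl v
  apply_mem _ _ hv := (hv rfl).elim

theorem insert_of_apply_ne (hτ : IsSquareMatching E F τ) (hx : τ x ≠ x) :
    IsSquareMatching E (insert x F) τ where
  involutive := hτ.involutive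
  comp_apply := hτ.comp_apply
  apply_ne := Set.forall_mem_insert.2 ⟨hx, hτ.apply_ne⟩
  rel_apply v hv := hτ.rel_apply v fun h => hv (Or.inr h)
  apply_mem v hv hne := Or.inr (hτ.apply_mem v (fun h => hv (Or.inr h)) hne)

theorem insert_of_apply_eq_self (hτ : IsSquareMatching E F τ) [DecidableEq V]
    (hrefl : ∀ v, E v v) (hsymm : ∀ v w, E v w → E w v)
    (hxu : E x u) (hu : u ∉ insert x F) (hτx : τ x = x) (hτu : τ u = u) :
    IsSquareMatching E (insert x F) (update (update τ x u) u x) where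
  involutive v := by
    have := hτ.involutive
    grind [update_apply, Involutive]
  comp_apply v := by
    rcases eq_or_ne v x with rfl | hvx
    · exact ⟨u, hxu, by grind [update_apply]⟩
    rcases eq_or_ne v u with rfl | hvu
    · exact ⟨v, hrefl v, by simpa using hsymm _ _ hxu⟩
    · simpa [hvx, hvu] using hτ.comp_apply v
  apply_ne v hv := by
    have := hτ.apply_ne
    grind [update_apply]
  rel_apply v hv := by
    have := hτ.rel_apply
    grind [update_apply]
  apply_mem v hv := by
    have := hτ.apply_mem
    grind [update_apply]

-- Conjugating by the transposition hands the partner of `u` over to `x` and leaves `u` unmatched.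
theorem insert_of_apply_ne_self (hτ : IsSquareMatching E F τ) [DecidableEq V]
    (hrefl : ∀ v, E v v) (hsymm : ∀ v w, E v w → E w v)
    (hxu : E x u) (hu : u ∉ insert x F) (hτx : τ x = x) (hτu : τ u ≠ u) :
    IsSquareMatching E (insert x F) (Equiv.swap x u ∘ τ ∘ Equiv.swap x u) where
  involutive v := by simp [hτ.involutive _]
  comp_apply v := by
    have huτ : E u (τ u) := hτ.rel_apply u fun h => hu (Or.inr h)
    rcases eq_or_ne v x with rfl | hvx
    · exact ⟨u, hxu, by grind⟩
    rcases eq_or_ne v u with rfl | hvu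
    · exact ⟨v, hrefl v, by simp [hτx, hrefl]⟩
    rcases eq_or_ne v (τ u) with rfl | hvτ
    · exact ⟨u, hsymm _ _ huτ, by
        simpa [Equiv.swap_apply_of_ne_of_ne hvx hvu, hτ.involutive u] using hsymm _ _ hxu⟩
    · have := hτ.involutive v
      have := hτ.comp_apply v
      grind
  apply_ne v hv := by
    have := hτ.apply_ne
    grind
  rel_apply v hv := by
    have := hτ.rel_apply
    have := hτ.apply_mem
    have := hτ.involutive
    grind [Involutive]
  apply_mem v hv := by
    have := hτ.apply_mem
    have := hτ.involutive
    grind [Involutive]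

theorem exists_insert (hτ : IsSquareMatching E F τ)
    (hrefl : ∀ v, E v v) (hsymm : ∀ v w, E v w → E w v) (hxu : E x u) (hu : u ∉ insert x F) :
    ∃ τ', IsSquareMatching E (insert x F) τ' := by
  classical
  by_cases hτx : τ x = x
  · by_cases hτu : τ u = u
    · exact ⟨_, hτ.insert_of_apply_eq_self hrefl hsymm hxu hu hτx hτu⟩
    · exact ⟨_, hτ.insert_of_apply_ne_self hrefl hsymm hxu hu hτx hτu⟩
  · exact ⟨τ, hτ.insert_of_apply_ne hτx⟩

theorem exists_finset (hrefl : ∀ v, E v v) (hsymm : ∀ v w, E v w → E w v)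
    (hexit : ∀ A : Finset V, A.Nonempty → ∃ x ∈ A, ∃ u ∉ A, E x u) (A : Finset V) :
    ∃ τ, IsSquareMatching E (A : Set V) τ := by
  classical
  induction A using Finset.strongInduction with
  | H A ih =>
    rcases A.eq_empty_or_nonempty with rfl | hA
    · exact ⟨id, by simpa using id_empty hrefl⟩
    · obtain ⟨x, hx, u, hu, hxu⟩ := hexit A hA
      obtain ⟨τ, hτ⟩ := ih (A.erase x) (Finset.erase_ssubset hx)
      have hinsert : insert x (A.erase x : Set V) = A := by
        rw [← Finset.coe_insert, Finset.insert_erase hx]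
      rw [← hinsert]
      exact hτ.exists_insert hrefl hsymm hxu (by rwa [hinsert])

theorem exists_univ (hrefl : ∀ v, E v v) (hsymm : ∀ v w, E v w → E w v)
    (hfin : ∀ v, {w | E v w}.Finite)
    (hexit : ∀ A : Finset V, A.Nonempty → ∃ x ∈ A, ∃ u ∉ A, E x u) :
    ∃ τ, IsSquareMatching E Set.univ τ := by
  classical
  have hfin₂ (v : V) : Finite {w // Comp E E v w} := by
    refine (((hfin v).biUnion fun u _ => hfin u).subset ?_).to_subtype
    rintro w ⟨u, hvu, huw⟩
    exact Set.mem_biUnion hvu huw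
  choose τ hτ using exists_finset hrefl hsymm hexit
  obtain ⟨χ, hχ⟩ := Finset.rado_selection
    (β := fun v => {w // Comp E E v w}) fun A v => ⟨τ A v, (hτ A).comp_apply v⟩
  have happrox (A : Finset V) : ∃ B ⊇ A, ∀ v ∈ A, (χ v : V) = τ B v := by
    obtain ⟨B, hAB, hB⟩ := hχ A
    exact ⟨B, hAB, fun v hv => congrArg Subtype.val (hB v hv)⟩
  refine ⟨fun v => χ v, fun v => ?_, fun v => (χ v).2, fun v _ => ?_,
    fun v hv => (hv trivial).elim, fun v hv => (hv trivial).elim⟩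
  · obtain ⟨B, -, hB⟩ := happrox {v, ↑(χ v)}
    rw [hB (χ v) (by simp), hB v (by simp), (hτ B).involutive]
  · obtain ⟨B, hvB, hB⟩ := happrox {v}
    rw [hB v (by simp)]
    exact (hτ B).apply_ne v (hvB (by simp))

end IsSquareMatching

/-- The relation `R` is a controlled set (entourage) of the left-invariant coarse structure of `G`:
it only relates elements at bounded distance. For an equivalence relation this says that its
classes have finitely many shapes up to left translation. -/
def IsControlled {G : Type*} [Group G] (R : G → G → Prop) : Prop :=
  ∃ B : Set G, B.Finite ∧ ∀ g h, R g h → g⁻¹ * h ∈ B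

namespace IsControlled

variable {G V : Type*} [Group G] {R S : G → G → Prop} {π : G → V}

theorem mono (hS : IsControlled S) (hRS : ∀ g h, R g h → S g h) : IsControlled R :=
  let ⟨B, hB, hSB⟩ := hS
  ⟨B, hB, fun g h hgh => hSB g h (hRS g h hgh)⟩

theorem or (hR : IsControlled R) (hS : IsControlled S) : IsControlled fun g h => R g h ∨ S g h := by
  obtain ⟨B, hB, hRB⟩ := hR
  obtain ⟨C, hC, hSC⟩ := hS
  exact ⟨B ∪ C, hB.union hC, fun g h => Or.imp (hRB g h) (hSC g h)⟩

theorem comp (hR : IsControlled R) (hS : IsControlled S) : IsControlled (Comp R S) := by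
  obtain ⟨B, hB, hRB⟩ := hR
  obtain ⟨C, hC, hSC⟩ := hS
  refine ⟨B * C, hB.mul hC, ?_⟩
  rintro g h ⟨x, hgx, hxh⟩
  simpa [mul_assoc] using Set.mul_mem_mul (hRB g x hgx) (hSC x h hxh)

theorem of_finite {A : Set G} (hA : A.Finite) : IsControlled fun g h => g ∈ A ∧ h ∈ A :=
  ⟨A⁻¹ * A, hA.inv.mul hA, fun _ _ hgh => Set.mul_mem_mul (Set.inv_mem_inv.2 hgh.1) hgh.2⟩

theorem finite_setOf (hR : IsControlled R) (g : G) : {h | R g h}.Finite := by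
  obtain ⟨B, hB, hRB⟩ := hR
  exact (hB.smul_set (a := g)).subset fun h hgh =>
    Set.mem_smul_set_iff_inv_smul_mem.2 (hRB g h hgh)

theorem finite_preimage (hπ : IsControlled (Eq on π)) {F : Set V} (hF : F.Finite) :
    (π ⁻¹' F).Finite := by
  refine hF.preimage' fun v _ => ?_
  rcases (π ⁻¹' {v}).eq_empty_or_nonempty with hv | ⟨g, rfl⟩
  · simp [hv]
  · exact (hπ.finite_setOf g).subset fun _ hh => Eq.symm hh

theorem finite_setOf_onFun {E : V → V → Prop} (hE : IsControlled (E on π)) (hsurj : Surjective π)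
    (v : V) : {w | E v w}.Finite := by
  obtain ⟨g, rfl⟩ := hsurj v
  refine ((hE.finite_setOf g).image π).subset fun w hw => ?_
  obtain ⟨h, rfl⟩ := hsurj w
  exact ⟨h, hw, rfl⟩

theorem comp_onFun {E E' : V → V → Prop} (hE : IsControlled (E on π)) (hE' : IsControlled (E' on π))
    (hsurj : Surjective π) : IsControlled (Comp E E' on π) := by
  refine (hE.comp hE').mono ?_
  rintro g h ⟨v, hgv, hvh⟩
  obtain ⟨x, rfl⟩ := hsurj v
  exact ⟨x, hgv, hvh⟩

theorem map_onFun (hR : IsControlled R) (hπ : IsControlled (Eq on π)) :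
    IsControlled (Relation.Map R π π on π) := by
  refine (hπ.comp (hR.comp hπ)).mono ?_
  rintro g h ⟨x, y, hxy, hxg, hyh⟩
  exact ⟨x, hxg.symm, y, hxy, hyh⟩

theorem swap_onFun [DecidableEq V] (hπ : IsControlled (Eq on π)) (p q : V) :
    IsControlled ((fun v w => Equiv.swap p q v = w) on π) := by
  refine (hπ.or (of_finite (hπ.finite_preimage (Set.toFinite {p, q})))).mono ?_
  intro g h hgh
  simp only [onFun, Set.mem_preimage, Set.mem_insert_iff, Set.mem_singleton_iff] at hgh ⊢
  grind

end IsControlled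

section Quotient

variable {G V : Type*} [Group G] {π : G → V}

theorem exists_mul_notMem_of_infinite_closure {T : Set G} [Infinite (Subgroup.closure T)]
    {A : Set G} (hA : A.Finite) (hne : A.Nonempty) : ∃ g ∈ A, ∃ s ∈ T ∪ T⁻¹, g * s ∉ A := by
  by_contra! hclosed
  obtain ⟨g, hg⟩ := hne
  have hmem (h : G) (hh : h ∈ Subgroup.closure T) : g * h ∈ A := by
    induction hh using Subgroup.closure_induction_right with
    | one => rwa [mul_one]
    | mul_right x _ s hs ih => simpa [mul_assoc] using hclosed _ ih s (Or.inl hs)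
    | mul_inv_cancel x _ s hs ih =>
      simpa [mul_assoc] using hclosed _ ih s⁻¹ (Or.inr (Set.inv_mem_inv.2 hs))
  have hinf : (Subgroup.closure T : Set G).Infinite := Set.infinite_coe_iff.1 ‹_›
  exact (hinf.image (mul_right_injective g).injOn).mono (Set.image_subset_iff.2 hmem) hA

theorem exists_involutive_isControlled (hπ : IsControlled (Eq on π)) (hsurj : Surjective π)
    {T : Set G} (hT : T.Finite) [Infinite (Subgroup.closure T)] :
    ∃ τ : V → V, Involutive τ ∧ (∀ v, τ v ≠ v) ∧ IsControlled ((fun v w => τ v = w) on π) := by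
  set S : Set G := insert 1 (T ∪ T⁻¹) with hS
  set E : V → V → Prop := Relation.Map (fun g h => g⁻¹ * h ∈ S) π π
  have hE : IsControlled (E on π) :=
    IsControlled.map_onFun ⟨S, (hT.union hT.inv).insert 1, fun _ _ => id⟩ hπ
  have hrefl (v : V) : E v v := by
    obtain ⟨g, rfl⟩ := hsurj v
    exact ⟨g, g, by simp [hS], rfl, rfl⟩
  have hsymm (v w : V) : E v w → E w v := by
    rintro ⟨g, h, hgh, rfl, rfl⟩
    refine ⟨h, g, ?_, rfl, rfl⟩
    have hSinv : S⁻¹ = S := by simp [hS, Set.union_comm]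
    rw [← hSinv]
    simpa using hgh
  have hexit (A : Finset V) (hA : A.Nonempty) : ∃ v ∈ A, ∃ w ∉ A, E v w := by
    obtain ⟨g, hg, s, hs, hgs⟩ := exists_mul_notMem_of_infinite_closure (T := T)
      (hπ.finite_preimage A.finite_toSet) (hA.to_set.preimage hsurj)
    exact ⟨π g, hg, π (g * s), hgs, g, g * s, by simpa [hS] using Or.inr hs, rfl, rfl⟩
  obtain ⟨τ, hτ⟩ := IsSquareMatching.exists_univ hrefl hsymm (hE.finite_setOf_onFun hsurj) hexit
  refine ⟨τ, hτ.involutive, fun v => hτ.apply_ne v trivial, (hE.comp_onFun hE hsurj).mono ?_⟩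
  rintro g h (hgh : τ (π g) = π h)
  change Comp E E (π g) (π h)
  exact hgh ▸ hτ.comp_apply (π g)

theorem exists_involutive_isControlled_apply_eq (hπ : IsControlled (Eq on π)) (hsurj : Surjective π)
    {τ : V → V} (hτ : Involutive τ) (hne : ∀ v, τ v ≠ v)
    (hcontr : IsControlled ((fun v w => τ v = w) on π)) {p q : V} (hpq : p ≠ q) :
    ∃ τ' : V → V, Involutive τ' ∧ (∀ v, τ' v ≠ v) ∧ IsControlled ((fun v w => τ' v = w) on π) ∧
      τ' p = q := by
  classical
  set σ := Equiv.swap (τ p) q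
  have hσ : IsControlled ((fun v w => σ v = w) on π) := hπ.swap_onFun (τ p) q
  refine ⟨σ ∘ τ ∘ σ, fun v => by simp [σ, hτ _], fun v h => hne (σ v) ?_, ?_, ?_⟩
  · rw [← Equiv.swap_apply_self (τ p) q (τ (σ v))]
    exact congrArg σ h
  · refine (hσ.comp_onFun (hcontr.comp_onFun hσ hsurj) hsurj).mono fun g h hgh => ?_
    exact ⟨_, rfl, _, rfl, hgh⟩
  · simp [σ, Equiv.swap_apply_of_ne_of_ne (hne p).symm hpq]

end Quotient

-- The unordered pair `s(v, τ v)` labels the union of the matched fibres over `v` and `τ v`.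
theorem ker_sym2_mk_apply_iff {α V : Type*} {π : α → V} {τ : V → V} (hτ : Involutive τ) {g h : α} :
    Setoid.ker (fun g => s(π g, τ (π g))) g h ↔ π g = π h ∨ τ (π g) = π h := by
  rw [Setoid.ker_def, Sym2.eq_iff]
  grind [Involutive]

/-- The equivalence relations whose classes are the pieces of a fair polytiling: the classes have
finitely many shapes up to left translation and all have the same cardinality. The former makes the
classes finite, so that `Set.ncard` is their true size. -/
structure IsFairSetoid {G : Type*} [Group G] (r : Setoid G) : Prop where
  isControlled : IsControlled r
  ncard_eq : ∀ g h, {x | r x g}.ncard = {x | r x h}.ncard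

namespace IsFairSetoid

variable {G : Type*} [Group G] {r : Setoid G}

theorem bot : IsFairSetoid (⊥ : Setoid G) where
  isControlled := ⟨{1}, Set.finite_singleton 1, fun g h (hgh : g = h) => by simp [hgh]⟩
  ncard_eq g h := by simp

theorem leftRel (H : Subgroup G) [Finite H] : IsFairSetoid (QuotientGroup.leftRel H) where
  isControlled := ⟨H, Set.toFinite _, fun _ _ => QuotientGroup.leftRel_apply.1⟩
  ncard_eq g h := by
    have hclass (g : G) : {x | QuotientGroup.leftRel H x g} = g • (H : Set G) := by
      ext x
      rw [Set.mem_ofPred_eq, Setoid.comm', QuotientGroup.leftRel_apply,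
        Set.mem_smul_set_iff_inv_smul_mem, smul_eq_mul, SetLike.mem_coe]
    rw [hclass, hclass, Set.ncard_smul_set, Set.ncard_smul_set]

theorem isControlled_eq_onFun_mk (hr : IsFairSetoid r) : IsControlled (Eq on Quotient.mk r) :=
  hr.isControlled.mono fun _ _ => Quotient.exact

theorem ncard_preimage_mk_eq (hr : IsFairSetoid r) (v w : Quotient r) :
    (Quotient.mk r ⁻¹' {v}).ncard = (Quotient.mk r ⁻¹' {w}).ncard := by
  have hclass (g : G) : Quotient.mk r ⁻¹' {Quotient.mk r g} = {x | r x g} :=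
    Set.ext fun _ => Quotient.eq
  induction v, w using Quotient.inductionOn₂ with
  | h g h => rw [hclass, hclass, hr.ncard_eq g h]

theorem ker_sym2_mk (hr : IsFairSetoid r) {τ : Quotient r → Quotient r} (hτ : Involutive τ)
    (hne : ∀ v, τ v ≠ v)
    (hcontr : IsControlled ((fun v w => τ v = w) on (Quotient.mk r))) :
    IsFairSetoid (Setoid.ker fun g => s(Quotient.mk r g, τ (Quotient.mk r g))) where
  isControlled := (hr.isControlled.or hcontr).mono fun g h hgh =>
    ((ker_sym2_mk_apply_iff hτ).1 hgh).imp_left Quotient.exact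
  ncard_eq := by
    have hclass (g : G) : {x | Setoid.ker (fun g => s(Quotient.mk r g, τ (Quotient.mk r g))) x g} =
        Quotient.mk r ⁻¹' {Quotient.mk r g} ∪ Quotient.mk r ⁻¹' {τ (Quotient.mk r g)} := by
      ext x
      rw [Set.mem_ofPred_eq, Setoid.comm', ker_sym2_mk_apply_iff hτ]
      simp [eq_comm]
    have hfin (v : Quotient r) : (Quotient.mk r ⁻¹' {v}).Finite :=
      hr.isControlled_eq_onFun_mk.finite_preimage (Set.finite_singleton v)
    have hdisj (v : Quotient r) :
        Disjoint (Quotient.mk r ⁻¹' {v}) (Quotient.mk r ⁻¹' {τ v}) :=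
      Disjoint.preimage _ (Set.disjoint_singleton.2 (hne v).symm)
    intro g h
    rw [hclass, hclass, Set.ncard_union_eq (hdisj _) (hfin _) (hfin _),
      Set.ncard_union_eq (hdisj _) (hfin _) (hfin _)]
    exact congrArg₂ (· + ·) (hr.ncard_preimage_mk_eq _ _) (hr.ncard_preimage_mk_eq _ _)

theorem exists_le_rel (hr : IsFairSetoid r) (a : G) :
    ∃ r' : Setoid G, IsFairSetoid r' ∧ r ≤ r' ∧ r' a 1 := by
  obtain ⟨B, hB, hrB⟩ := hr.isControlled
  rcases finite_or_infinite (Subgroup.closure (insert a B)) with hH | hH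
  · refine ⟨QuotientGroup.leftRel (Subgroup.closure (insert a B)), leftRel _, ?_, ?_⟩
    · intro g h hgh
      exact QuotientGroup.leftRel_apply.2 (Subgroup.subset_closure (Or.inr (hrB g h hgh)))
    · rw [QuotientGroup.leftRel_apply, mul_one, inv_mem_iff]
      exact Subgroup.subset_closure (Or.inl rfl)
  · by_cases ha : r a 1
    · exact ⟨r, hr, le_rfl, ha⟩
    have hmk := hr.isControlled_eq_onFun_mk
    obtain ⟨τ₀, hτ₀, hne₀, hcontr₀⟩ :=
      exists_involutive_isControlled hmk Quotient.mk_surjective (hB.insert a)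
    obtain ⟨τ, hτ, hne, hcontr, hτa⟩ := exists_involutive_isControlled_apply_eq hmk
      Quotient.mk_surjective hτ₀ hne₀ hcontr₀ (mt Quotient.exact ha)
    refine ⟨_, hr.ker_sym2_mk hτ hne hcontr, fun g h hgh => ?_, ?_⟩
    · exact (ker_sym2_mk_apply_iff hτ).2 (Or.inl (Quotient.sound hgh))
    · exact (ker_sym2_mk_apply_iff hτ).2 (Or.inr hτa)

theorem exists_chain [Countable G] :
    ∃ r : ℕ → Setoid G, (∀ n, IsFairSetoid (r n)) ∧ (∀ n, r n ≤ r (n + 1)) ∧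
      ∀ g, ∃ n, r n g 1 := by
  obtain ⟨e, he⟩ := exists_surjective_nat G
  choose next hfair hle hrel using
    fun (r : {r : Setoid G // IsFairSetoid r}) (a : G) => r.2.exists_le_rel a
  let r : ℕ → {r : Setoid G // IsFairSetoid r} :=
    Nat.rec ⟨⊥, bot⟩ fun n r => ⟨next r (e n), hfair r (e n)⟩
  refine ⟨fun n => (r n).1, fun n => (r n).2, fun n => hle (r n) (e n), fun g => ?_⟩
  obtain ⟨n, rfl⟩ := he g
  exact ⟨n + 1, hrel (r n) (e n)⟩

end IsFairSetoid

namespace Polytiling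

variable {G : Type*} [Group G] {P : Polytiling G} {r : Setoid G}

theorem fair_of_pieces_eq_classes (hP : P.pieces = r.classes)
    (hr : ∀ g h, {x | r x g}.ncard = {x | r x h}.ncard) : P.Fair := by
  have hclass (i : Fin P.k) : ∃ g, (P.T i).card = {x | r x g}.ncard := by
    obtain ⟨δ, hδ⟩ := P.delta_nonempty i
    have hmem : δ • (P.T i : Set G) ∈ r.classes := hP ▸ ⟨i, δ, hδ, rfl⟩
    obtain ⟨g, hg⟩ := hmem
    exact ⟨g, by rw [← hg, Set.ncard_smul_set, Set.ncard_coe_finset]⟩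
  intro i j
  obtain ⟨g, hg⟩ := hclass i
  obtain ⟨h, hh⟩ := hclass j
  rw [hg, hh, hr g h]

theorem coe_T_eq_setOf_rel_one (hP : P.pieces = r.classes) {i : Fin P.k} (hi : 1 ∈ P.Δ i) :
    (P.T i : Set G) = {g | r g 1} := by
  have hmem : (P.T i : Set G) ∈ r.classes := hP ▸ ⟨i, 1, hi, (one_smul G _).symm⟩
  exact Setoid.eq_of_mem_classes hmem (P.one_mem i) (r.mem_classes 1) (r.refl 1)

end Polytiling

theorem exists_equiv_fin_succ_apply_zero {Y : Type*} [Finite Y] (y : Y) :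
    ∃ n, ∃ e : Fin (n + 1) ≃ Y, e 0 = y := by
  obtain ⟨n, ⟨e⟩⟩ := Finite.exists_equiv_fin Y
  obtain _ | n := n
  · exact (e y).elim0
  · exact ⟨n, (Equiv.swap 0 (e y)).trans e.symm, by simp⟩

theorem exists_rightInverse_apply_eq {α β : Type*} {f : α → β} (hf : Surjective f) (a : α) :
    ∃ c : β → α, RightInverse c f ∧ c (f a) = a := by
  classical
  refine ⟨update (surjInv hf) (f a) a, fun b => ?_, update_self ..⟩
  rcases eq_or_ne b (f a) with rfl | hb
  · rw [update_self]
  · rw [update_of_ne hb, surjInv_eq hf]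

namespace IsControlled

variable {G : Type*} [Group G] {r : Setoid G}

/-- The shape of the class of `g`: the class translated by `g⁻¹`, so that `g` becomes `1`. It
depends on `g` and not only on its class. -/
noncomputable def shape (hr : IsControlled r) (g : G) : Finset G :=
  ((hr.finite_setOf g).smul_set (a := g⁻¹)).toFinset

theorem smul_shape (hr : IsControlled r) (g : G) : g • (hr.shape g : Set G) = {x | r x g} := by
  ext x
  simp [shape, r.comm' (x := g)]

theorem one_mem_shape (hr : IsControlled r) (g : G) : 1 ∈ hr.shape g := by
  simp [shape, Set.mem_smul_set_iff_inv_smul_mem]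

theorem finite_range_shape (hr : IsControlled r) : (Set.range hr.shape).Finite := by
  obtain ⟨B, hB, hrB⟩ := id hr
  refine hB.toFinset.powerset.finite_toSet.subset ?_
  rintro _ ⟨g, rfl⟩
  refine Finset.mem_coe.2 (Finset.mem_powerset.2 fun b hb => hB.mem_toFinset.2 ?_)
  simpa using hrB g (g * b) (by simpa [shape, Set.mem_smul_set_iff_inv_smul_mem] using hb)

/-- The polytiling by the classes of `r`, with the transversal `c` as the set of all centers. Its
tiles are the shapes seen from the points of `c`, enumerated by `e`. -/
noncomputable def polytiling (hr : IsControlled r) {c : Quotient r → G}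
    (hc : RightInverse c (Quotient.mk r)) {n : ℕ}
    (e : Fin (n + 1) ≃ Set.range (hr.shape ∘ c)) : Polytiling G where
  k := n + 1
  k_pos := n.succ_pos
  T i := e i
  Δ i := {g | g ∈ Set.range c ∧ hr.shape g = e i}
  one_mem i := by
    obtain ⟨v, hv⟩ := (e i).2
    exact hv ▸ hr.one_mem_shape (c v)
  delta_nonempty i :=
    let ⟨v, hv⟩ := (e i).2
    ⟨c v, ⟨v, rfl⟩, hv⟩
  covers g := by
    obtain ⟨i, hi⟩ := e.surjective ⟨hr.shape (c (Quotient.mk r g)), Quotient.mk r g, rfl⟩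
    refine ⟨i, c (Quotient.mk r g), ⟨⟨_, rfl⟩, by rw [hi]⟩, ?_⟩
    rw [hi, hr.smul_shape]
    exact Quotient.exact (hc _).symm
  disj := by
    rintro i j _ ⟨⟨v, rfl⟩, hv⟩ _ ⟨⟨w, rfl⟩, hw⟩ hne
    rw [← hv, ← hw, hr.smul_shape, hr.smul_shape]
    refine Set.disjoint_left.2 fun x hxv hxw => hne ?_
    have hvw : v = w := by
      rw [← hc v, ← hc w]
      exact Quotient.sound (r.trans (r.symm hxv) hxw)
    subst hvw
    rw [e.injective (Subtype.ext (hv.symm.trans hw))]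

theorem smul_T_polytiling (hr : IsControlled r) {c : Quotient r → G}
    (hc : RightInverse c (Quotient.mk r)) {n : ℕ} (e : Fin (n + 1) ≃ Set.range (hr.shape ∘ c))
    {i : Fin (n + 1)} {δ : G} (hδ : δ ∈ (hr.polytiling hc e).Δ i) :
    δ • ((hr.polytiling hc e).T i : Set G) = {x | r x δ} := by
  rw [← hr.smul_shape δ, hδ.2]
  rfl

theorem pieces_polytiling (hr : IsControlled r) {c : Quotient r → G}
    (hc : RightInverse c (Quotient.mk r)) {n : ℕ}
    (e : Fin (n + 1) ≃ Set.range (hr.shape ∘ c)) : (hr.polytiling hc e).pieces = r.classes := by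
  ext A
  constructor
  · rintro ⟨i, δ, hδ, rfl⟩
    exact ⟨δ, hr.smul_T_polytiling hc e hδ⟩
  · rintro ⟨g, rfl⟩
    obtain ⟨i, δ, hδ, hg⟩ := (hr.polytiling hc e).covers g
    have hclass : δ • ((hr.polytiling hc e).T i : Set G) ∈ r.classes :=
      ⟨δ, hr.smul_T_polytiling hc e hδ⟩
    exact ⟨i, δ, hδ, Setoid.eq_of_mem_classes (r.mem_classes g) (r.refl g) hclass hg⟩

theorem exists_polytiling (hr : IsControlled r) :
    ∃ P : Polytiling G, 1 ∈ P.Δ P.fst ∧ P.pieces = r.classes := by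
  obtain ⟨c, hc, hc₁⟩ := exists_rightInverse_apply_eq (Quotient.mk_surjective (s := r)) 1
  have : Finite (Set.range (hr.shape ∘ c)) :=
    (hr.finite_range_shape.subset (Set.range_comp_subset_range _ _)).to_subtype
  obtain ⟨n, e, he⟩ := exists_equiv_fin_succ_apply_zero
    (⟨hr.shape 1, Quotient.mk r 1, congrArg hr.shape hc₁⟩ : Set.range (hr.shape ∘ c))
  exact ⟨hr.polytiling hc e, ⟨⟨_, hc₁⟩, congrArg Subtype.val he.symm⟩, hr.pieces_polytiling hc e⟩

end IsControlled

end

theorem fg_group_is_poly_ccc_general (G : Type*) [Group G] [Countable G] :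
    ∃ P : ℕ → Polytiling G,
      (∀ n, (P n).Fair) ∧
      (∀ n, (1 : G) ∈ (P n).Δ (P n).fst) ∧
      (∀ n, ((P n).T (P n).fst : Set G) ⊆ ((P (n + 1)).T ((P (n + 1)).fst) : Set G)) ∧
      (∀ g : G, ∃ n, g ∈ (P n).T (P n).fst) ∧
      (∀ n, ∀ A ∈ (P n).pieces, ∃ B ∈ (P (n + 1)).pieces, A ⊆ B) := by
  obtain ⟨r, hr, hle, hcofinal⟩ := IsFairSetoid.exists_chain (G := G)
  choose P hone hpieces using fun n => (hr n).isControlled.exists_polytiling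
  have hT (n : ℕ) : ((P n).T (P n).fst : Set G) = {g | r n g 1} :=
    Polytiling.coe_T_eq_setOf_rel_one (hpieces n) (hone n)
  refine ⟨P, fun n => Polytiling.fair_of_pieces_eq_classes (hpieces n) (hr n).ncard_eq, hone,
    fun n => ?_, fun g => ?_, fun n A hA => ?_⟩
  · rw [hT, hT]
    exact fun g hg => hle n hg
  · obtain ⟨n, hn⟩ := hcofinal g
    exact ⟨n, Finset.mem_coe.1 ((hT n).symm ▸ hn)⟩
  · rw [hpieces] at hA
    obtain ⟨g, rfl⟩ := hA
    exact ⟨{x | r (n + 1) x g}, hpieces (n + 1) ▸ (r (n + 1)).mem_classes g, fun x hx => hle n hx⟩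

/-- Every finitely generated group is poly-ccc: it admits a centered, cofinal, coherent
sequence of fair polytilings. -/
theorem fg_group_is_poly_ccc (G : Type*) [Group G] [Group.FG G] :
    ∃ P : ℕ → Polytiling G,
      (∀ n, (P n).Fair) ∧
      (∀ n, (1 : G) ∈ (P n).Δ (P n).fst) ∧
      (∀ n, ((P n).T (P n).fst : Set G) ⊆ ((P (n + 1)).T ((P (n + 1)).fst) : Set G)) ∧
      (∀ g : G, ∃ n, g ∈ (P n).T (P n).fst) ∧
      (∀ n, ∀ A ∈ (P n).pieces, ∃ B ∈ (P (n + 1)).pieces, A ⊆ B) := by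
  obtain ⟨α, _, φ, hφ⟩ := Group.fg_iff_exists_freeGroup_hom_surjective_finite.1 ‹Group.FG G›
  have : Countable G := hφ.countable
  exact fg_group_is_poly_ccc_general G
end

section
/- Every countable group G is poly-MT: for every finite subset F ⊆ G there is a fair polytile (T₁,…,T_k) of G with F ⊆ T₁. -/
open scoped Pointwise

/-!
It suffices to partition `G` into sets of one common size, one of them containing `F` and `1`, so
that only finitely many displacements `x⁻¹ * y` occur between equivalent `x`, `y`: the tiles are
then the finitely many translates `x⁻¹ • A`, for `A` a class and `x` its chosen representative.

If `F` generates a finite subgroup, its left cosets do. Otherwise every component of the Cayley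
graph of `F` is infinite. Given a finite set `K` of vertices, hang each component from a root far
from `K`. In a finite rooted forest one can repeatedly remove the `n` deepest vertices below the
`(n - 1)`-st ancestor of a deepest vertex; this produces sets of size `n` and bounded diameter that
exhaust everything of depth at least `n`, in particular `K`. By compactness there is a partition of
all of `G` into such sets, and a permutation of `G` with finite support turns one of them into a
set containing `F`.
-/

section Forest

variable {α : Type*}

theorem exists_subset_card_eq_forall_lt_mem {β : Type*} [LinearOrder β] (d : α → β)
    {B : Finset α} {n : ℕ} (hn : n ≤ B.card) :
    ∃ P ⊆ B, P.card = n ∧ ∀ x ∈ P, ∀ y ∈ B, d x < d y → y ∈ P := by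
  classical
  induction n with
  | zero => exact ⟨∅, by simp⟩
  | succ n ih =>
    obtain ⟨Q, hQB, hQcard, hQ⟩ := ih (by omega)
    have hne : (B \ Q).Nonempty := by
      rw [← Finset.card_pos, Finset.card_sdiff_of_subset hQB]
      omega
    obtain ⟨q, hq, hqmax⟩ := Finset.exists_max_image (B \ Q) d hne
    obtain ⟨hqB, hqQ⟩ := Finset.mem_sdiff.1 hq
    refine ⟨insert q Q, Finset.insert_subset hqB hQB,
      by rw [Finset.card_insert_of_notMem hqQ, hQcard], fun x hx y hy hxy => ?_⟩
    by_contra hy'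
    obtain ⟨-, hyQ⟩ : y ≠ q ∧ y ∉ Q := by simpa using hy'
    rcases Finset.mem_insert.1 hx with rfl | hxQ
    · exact (hqmax y (Finset.mem_sdiff.2 ⟨hy, hyQ⟩)).not_gt hxy
    · exact hyQ (hQ x hxQ y hy hxy)

/-- With `f` the parent map of a rooted forest, an `n`-cluster is a set of `n` vertices that have a
common ancestor fewer than `n` generations above each of them. The depth below is any `d` with
`d (f x) = d x - 1`, where the truncated subtraction makes `f` send roots to roots. -/
def IsCluster (f : α → α) (n : ℕ) (P : Finset α) : Prop :=
  P.card = n ∧ ∃ v, ∀ x ∈ P, ∃ k < n, f^[k] x = v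

variable {f : α → α} {d : α → ℕ} {n : ℕ}

theorem depth_iterate (hd : ∀ x, d (f x) = d x - 1) (k : ℕ) (x : α) :
    d (f^[k] x) = d x - k := by
  induction k with
  | zero => simp
  | succ k ih => rw [Function.iterate_succ_apply', hd, ih]; omega

theorem iterate_mem_of_le_depth (hd : ∀ x, d (f x) = d x - 1) {L : Set α}
    (hL : ∀ x ∈ L, d x ≠ 0 → f x ∈ L) {x : α} (hx : x ∈ L) {k : ℕ} (hk : k ≤ d x) :
    f^[k] x ∈ L := by
  induction k with
  | zero => exact hx
  | succ k ih =>
    rw [Function.iterate_succ_apply']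
    exact hL _ (ih (by omega)) (by rw [depth_iterate hd]; omega)

theorem exists_finset_superset_parent_mem (hd : ∀ x, d (f x) = d x - 1) (K : Finset α) :
    ∃ L : Finset α, K ⊆ L ∧ ∀ x ∈ L, d x ≠ 0 → f x ∈ L := by
  classical
  refine ⟨K.biUnion fun x => (Finset.range (d x + 1)).image fun k => f^[k] x,
    fun x hx => ?_, fun y hy hy0 => ?_⟩
  · exact Finset.mem_biUnion.2 ⟨x, hx, Finset.mem_image.2 ⟨0, by simp, rfl⟩⟩
  · simp only [Finset.mem_biUnion, Finset.mem_image, Finset.mem_range] at hy ⊢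
    obtain ⟨x, hx, k, -, rfl⟩ := hy
    rw [depth_iterate hd] at hy0
    exact ⟨x, hx, k + 1, by omega, Function.iterate_succ_apply' f k x⟩

theorem le_card_filter_iterate_eq [DecidableEq α] (hd : ∀ x, d (f x) = d x - 1) {L : Finset α}
    (hL : ∀ x ∈ L, d x ≠ 0 → f x ∈ L) {x : α} (hx : x ∈ L) (hnx : n ≤ d x) :
    n ≤ (L.filter fun y => ∃ k < n, f^[k] y = f^[n - 1] x).card := by
  refine (Finset.card_range n).ge.trans
    (Finset.card_le_card_of_injOn (fun k => f^[k] x) (fun k hk => ?_) fun a ha b hb hab => ?_)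
  · have hk : k < n := by simpa using hk
    refine Finset.mem_filter.2
      ⟨iterate_mem_of_le_depth hd hL hx (hk.le.trans hnx), n - 1 - k, by omega, ?_⟩
    rw [← Function.iterate_add_apply]
    congr 2
    omega
  · have hdepth := congrArg d hab
    simp only [depth_iterate hd] at hdepth
    simp only [Finset.coe_range, Set.mem_Iio] at ha hb
    omega

theorem exists_isCluster_subset [DecidableEq α] (hd : ∀ x, d (f x) = d x - 1) {L : Finset α}
    (hL : ∀ x ∈ L, d x ≠ 0 → f x ∈ L) {x : α} (hx : x ∈ L) (hnx : n ≤ d x) :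
    ∃ P ⊆ L, IsCluster f n P ∧ ∀ y ∈ L \ P, d y ≠ 0 → f y ∈ L \ P := by
  obtain ⟨z, hz, hzmax⟩ := Finset.exists_max_image L d ⟨x, hx⟩
  have hnz : n ≤ d z := hnx.trans (hzmax x hx)
  set B := L.filter fun y => ∃ k < n, f^[k] y = f^[n - 1] z
  have hchild : ∀ y ∈ L, f y ∈ B → y ∈ B ∧ d (f y) < d y := by
    intro y hy hfy
    obtain ⟨-, k, hkn, hk⟩ := Finset.mem_filter.1 hfy
    rw [← Function.iterate_succ_apply] at hk
    have hdepth : d y - (k + 1) = d z - (n - 1) := by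
      rw [← depth_iterate hd, ← depth_iterate hd, hk]
    have hyz := hzmax y hy
    have hfd := hd y
    exact ⟨Finset.mem_filter.2 ⟨hy, k + 1, by omega, hk⟩, by omega⟩
  obtain ⟨P, hPB, hPcard, hP⟩ :=
    exists_subset_card_eq_forall_lt_mem d (le_card_filter_iterate_eq hd hL hz hnz)
  refine ⟨P, hPB.trans (Finset.filter_subset _ _),
    ⟨hPcard, f^[n - 1] z, fun y hy => (Finset.mem_filter.1 (hPB hy)).2⟩, fun y hy hy0 => ?_⟩
  obtain ⟨hyL, hyP⟩ := Finset.mem_sdiff.1 hy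
  refine Finset.mem_sdiff.2 ⟨hL y hyL hy0, fun hfy => hyP ?_⟩
  obtain ⟨hyB, hlt⟩ := hchild y hyL (hPB hfy)
  exact hP _ hfy y hyB hlt

theorem exists_pairwiseDisjoint_isCluster (hd : ∀ x, d (f x) = d x - 1) (hn : 0 < n)
    (L : Finset α) (hL : ∀ x ∈ L, d x ≠ 0 → f x ∈ L) :
    ∃ 𝒞 : Set (Finset α), 𝒞.PairwiseDisjoint id ∧ (∀ P ∈ 𝒞, P ⊆ L ∧ IsCluster f n P) ∧
      ∀ x ∈ L, n ≤ d x → ∃ P ∈ 𝒞, x ∈ P := by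
  classical
  induction L using Finset.strongInduction with
  | H L ih =>
    by_cases hdeep : ∃ x ∈ L, n ≤ d x
    · obtain ⟨x, hx, hnx⟩ := hdeep
      obtain ⟨P, hPL, hP, hclosed⟩ := exists_isCluster_subset hd hL hx hnx
      have hPne : P.Nonempty := Finset.card_pos.1 (hP.1 ▸ hn)
      obtain ⟨𝒞, hdisj, h𝒞, hcover⟩ := ih (L \ P) (Finset.sdiff_ssubset hPL hPne) hclosed
      refine ⟨insert P 𝒞, hdisj.insert fun Q hQ _ => ?_, ?_, fun y hy hny => ?_⟩
      · exact Finset.disjoint_of_subset_right (h𝒞 Q hQ).1 Finset.disjoint_sdiff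
      · rintro Q (rfl | hQ)
        · exact ⟨hPL, hP⟩
        · exact ⟨(h𝒞 Q hQ).1.trans Finset.sdiff_subset, (h𝒞 Q hQ).2⟩
      · by_cases hyP : y ∈ P
        · exact ⟨P, Set.mem_insert _ _, hyP⟩
        · obtain ⟨Q, hQ, hyQ⟩ := hcover y (Finset.mem_sdiff.2 ⟨hy, hyP⟩) hny
          exact ⟨Q, Set.mem_insert_of_mem _ hQ, hyQ⟩
    · push Not at hdeep
      exact ⟨∅, by simp, by simp, fun x hx hnx => absurd hnx (hdeep x hx).not_ge⟩

end Forest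

section Setoid

variable {α : Type*}

theorem exists_setoid_class_eq_of_pairwiseDisjoint {ι : Type*} {t : Set ι} {s : ι → Set α}
    (ht : t.PairwiseDisjoint s) :
    ∃ r : Setoid α, ∀ i ∈ t, ∀ x ∈ s i, {y | r y x} = s i := by
  refine ⟨Setoid.ker fun x => {i ∈ t | x ∈ s i}, fun i hi x hx => Set.ext fun y => ?_⟩
  have huniq : ∀ z ∈ s i, {j ∈ t | z ∈ s j} = {i} := fun z hz => Set.ext fun j =>
    ⟨fun hj => ht.elim_set hj.1 hi z hj.2 hz, by rintro rfl; exact ⟨hi, hz⟩⟩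
  change {j ∈ t | y ∈ s j} = {j ∈ t | x ∈ s j} ↔ y ∈ s i
  rw [huniq x hx]
  exact ⟨fun h => (h.ge rfl).2, huniq y⟩

theorem exists_setoid_forall_class_mem {𝒜 : α → Set (Set α)} (h𝒜 : ∀ x, (𝒜 x).Finite)
    (h : ∀ K : Finset α, ∃ r : Setoid α, ∀ x ∈ K, {y | r y x} ∈ 𝒜 x) :
    ∃ r : Setoid α, ∀ x, {y | r y x} ∈ 𝒜 x := by
  choose R hR using h
  let U : Ultrafilter (Finset α) := Ultrafilter.of Filter.atTop
  let r : Setoid α :=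
    { r := fun x y => ∀ᶠ K in (U : Filter (Finset α)), R K x y
      iseqv :=
        { refl := fun x => .of_forall fun K => (R K).refl x
          symm := fun hxy => hxy.mono fun K => (R K).symm
          trans := fun hxy hyz => hxy.mp (hyz.mono fun K hyz hxy => (R K).trans hxy hyz) } }
  refine ⟨r, fun x => ?_⟩
  have hmem : ∀ᶠ K in (U : Filter (Finset α)), x ∈ K :=
    Ultrafilter.of_le Filter.atTop
      ((Filter.eventually_ge_atTop {x}).mono fun _ => Finset.singleton_subset_iff.1)
  obtain ⟨s, hs, hsK⟩ : ∃ s ∈ 𝒜 x, ∀ᶠ K in (U : Filter (Finset α)), {y | R K y x} = s :=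
    (Ultrafilter.eventually_exists_mem_iff (h𝒜 x)).1
      (hmem.mono fun K hK => ⟨_, hR K x hK, rfl⟩)
  have hclass : {y | r y x} = s := Set.ext fun y =>
    (Filter.eventually_congr (hsK.mono fun _ hK => Set.ext_iff.1 hK y)).trans
      Filter.eventually_const
  rwa [hclass]

theorem exists_quotient_section_apply_eq (r : Setoid α) (a : α) :
    ∃ rep : Quotient r → α, (∀ q, ⟦rep q⟧ = q) ∧ rep ⟦a⟧ = a := by
  classical
  refine ⟨Function.update Quotient.out ⟦a⟧ a, fun q => ?_, Function.update_self ..⟩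
  by_cases hq : q = ⟦a⟧
  · rw [hq, Function.update_self]
  · rw [Function.update_of_ne hq, Quotient.out_eq]

end Setoid

section Equiv

variable {α : Type*}

theorem exists_perm_finite_support_mapsTo {s t : Finset α} (h : s.card = t.card) :
    ∃ π : Equiv.Perm α, {x | π x ≠ x}.Finite ∧ Set.MapsTo π s t := by
  classical
  let E := {x // x ∈ s ∪ t}
  let e : {x : E // x.1 ∈ s} ≃ {x : E // x.1 ∈ t} :=
    (Equiv.subtypeSubtypeEquivSubtype (Finset.mem_union_left t)).trans <|
      (Finset.equivOfCardEq h).trans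
        (Equiv.subtypeSubtypeEquivSubtype (Finset.mem_union_right s)).symm
  refine ⟨Equiv.Perm.ofSubtype e.extendSubtype, (s ∪ t).finite_toSet.subset fun x hx => ?_,
    fun x hx => ?_⟩
  · by_contra hxE
    exact hx (Equiv.Perm.ofSubtype_apply_of_not_mem _ hxE)
  · rw [Equiv.Perm.ofSubtype_apply_of_mem _ (Finset.mem_union_left t hx)]
    exact e.extendSubtype_mem ⟨x, _⟩ hx

theorem exists_equiv_fin_apply_zero_eq [Finite α] (a : α) :
    ∃ (k : ℕ) (hk : 0 < k) (e : Fin k ≃ α), e ⟨0, hk⟩ = a := by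
  obtain ⟨k, ⟨e⟩⟩ := Finite.exists_equiv_fin α
  have hk : 0 < k := (e a).pos
  exact ⟨k, hk, (Equiv.swap ⟨0, hk⟩ (e a)).trans e.symm, by simp⟩

end Equiv

section Graph

variable {V : Type*} {G : SimpleGraph V}

theorem finite_ball_of_finite_neighborSet (hG : ∀ x, (G.neighborSet x).Finite) (x : V) (n : ℕ) :
    (G.ball x n).Finite := by
  induction n with
  | zero => simp
  | succ n ih =>
    refine ((ih.biUnion fun z _ => hG z).insert x).subset fun y hy => ?_
    obtain ⟨p, hp⟩ := SimpleGraph.exists_walk_of_edist_ne_top (hy.trans_le le_top).ne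
    rw [SimpleGraph.mem_ball, ← hp] at hy
    cases p with
    | nil => exact Set.mem_insert _ _
    | @cons _ z _ hadj q =>
      have hq : (q.length : ℕ∞) < n := by
        rw [SimpleGraph.Walk.length_cons] at hy
        exact_mod_cast Nat.lt_of_succ_lt_succ (by exact_mod_cast hy)
      exact .inr (Set.mem_biUnion ((SimpleGraph.edist_le q).trans_lt hq) hadj.symm)

theorem exists_edist_le_one_and_dist_eq_sub_one {x r : V} (h : G.Reachable x r) :
    ∃ y, G.edist x y ≤ 1 ∧ G.dist y r = G.dist x r - 1 := by
  obtain ⟨p, hp⟩ := h.exists_walk_length_eq_dist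
  cases p with
  | nil => exact ⟨x, by simp⟩
  | @cons _ y _ hadj q =>
    refine ⟨y, SimpleGraph.edist_le_one_iff_adj_or_eq.2 (.inl hadj), le_antisymm ?_ ?_⟩
    · rw [← hp, SimpleGraph.Walk.length_cons, Nat.add_sub_cancel]
      exact SimpleGraph.dist_le q
    · have := hadj.reachable.dist_triangle_left r
      rw [SimpleGraph.dist_eq_one_iff_adj.2 hadj] at this
      omega

theorem edist_iterate_le {f : V → V} (hf : ∀ x, G.edist x (f x) ≤ 1) (k : ℕ) (x : V) :
    G.edist x (f^[k] x) ≤ k := by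
  induction k with
  | zero => simp
  | succ k ih =>
    rw [Function.iterate_succ_apply']
    push_cast
    exact SimpleGraph.edist_triangle.trans (add_le_add ih (hf _))

theorem IsCluster.subset_ball {f : V → V} (hf : ∀ x, G.edist x (f x) ≤ 1) {n : ℕ} {P : Finset V}
    (hP : IsCluster f n P) {x : V} (hx : x ∈ P) : (P : Set V) ⊆ G.ball x (2 * n : ℕ) := by
  obtain ⟨-, v, hv⟩ := hP
  intro y hy
  obtain ⟨k, hk, hkv⟩ := hv x hx
  obtain ⟨l, hl, hlv⟩ := hv y hy
  calc G.edist y x ≤ G.edist y v + G.edist v x := SimpleGraph.edist_triangle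
    _ ≤ l + k := add_le_add (hlv ▸ edist_iterate_le hf l y)
        (SimpleGraph.edist_comm.trans_le (hkv ▸ edist_iterate_le hf k x))
    _ < (2 * n : ℕ) := by norm_cast; omega

theorem exists_forest_forall_le_depth (hG : ∀ x, (G.neighborSet x).Finite)
    (hinf : ∀ c : G.ConnectedComponent, c.supp.Infinite) (n : ℕ) (K : Finset V) :
    ∃ (f : V → V) (d : V → ℕ), (∀ x, d (f x) = d x - 1) ∧ (∀ x, G.edist x (f x) ≤ 1) ∧
      ∀ x ∈ K, n ≤ d x := by
  have hfin : (⋃ x ∈ K, G.ball x n).Finite :=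
    K.finite_toSet.biUnion fun x _ => finite_ball_of_finite_neighborSet hG x n
  choose root hroot hfar using fun c => (hinf c).exists_notMem_finite hfin
  have hreach : ∀ x, G.Reachable x (root (G.connectedComponentMk x)) := fun x =>
    (SimpleGraph.ConnectedComponent.exact (hroot _)).symm
  choose f hf hdist using fun x => exists_edist_le_one_and_dist_eq_sub_one (hreach x)
  refine ⟨f, fun x => G.dist x (root (G.connectedComponentMk x)), fun x => ?_, hf, fun x hx => ?_⟩
  · have hxf : G.Reachable x (f x) :=
      SimpleGraph.reachable_of_edist_ne_top ((hf x).trans_lt (by simp)).ne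
    simpa only [SimpleGraph.ConnectedComponent.sound hxf] using hdist x
  · by_contra! hlt
    refine hfar (G.connectedComponentMk x) (Set.mem_biUnion hx ?_)
    rw [SimpleGraph.mem_ball_comm, SimpleGraph.mem_ball, ← (hreach x).coe_dist_eq_edist]
    exact_mod_cast hlt

theorem exists_setoid_ncard_class_eq_and_subset_ball (hG : ∀ x, (G.neighborSet x).Finite)
    (hinf : ∀ c : G.ConnectedComponent, c.supp.Infinite) {n : ℕ} (hn : 0 < n) :
    ∃ r : Setoid V, ∀ x, {y | r y x}.ncard = n ∧ {y | r y x} ⊆ G.ball x (2 * n : ℕ) := by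
  refine exists_setoid_forall_class_mem (𝒜 := fun x => {s | s.ncard = n ∧ s ⊆ G.ball x (2 * n : ℕ)})
    (fun x => ?_) fun K => ?_
  · exact (finite_ball_of_finite_neighborSet hG x (2 * n)).finite_subsets.subset fun _ => And.right
  obtain ⟨f, d, hd, hf, hK⟩ := exists_forest_forall_le_depth hG hinf n K
  obtain ⟨L, hKL, hL⟩ := exists_finset_superset_parent_mem hd K
  obtain ⟨𝒞, hdisj, h𝒞, hcover⟩ := exists_pairwiseDisjoint_isCluster hd hn L hL
  obtain ⟨r, hr⟩ :=
    exists_setoid_class_eq_of_pairwiseDisjoint (Finset.pairwiseDisjoint_coe.2 hdisj)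
  refine ⟨r, fun x hx => ?_⟩
  obtain ⟨P, hP, hxP⟩ := hcover x (hKL hx) (hK x hx)
  have hcluster := (h𝒞 P hP).2
  rw [hr P hP x hxP]
  exact ⟨(Set.ncard_coe_finset P).trans hcluster.1, hcluster.subset_ball hf hxP⟩

end Graph

section Group

variable {G : Type*} [Group G]

theorem edist_mulCayley_mul_left_le (s : Set G) (g x y : G) :
    (SimpleGraph.mulCayley s).edist (g * x) (g * y) ≤ (SimpleGraph.mulCayley s).edist x y := by
  by_cases h : (SimpleGraph.mulCayley s).edist x y = ⊤
  · exact h ▸ le_top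
  · obtain ⟨p, hp⟩ := SimpleGraph.exists_walk_of_edist_ne_top h
    let φ : SimpleGraph.mulCayley s →g SimpleGraph.mulCayley s :=
      ⟨(g * ·), SimpleGraph.mulCayley_adj_mul_iff_right.2⟩
    rw [← hp, ← p.length_map φ]
    exact SimpleGraph.edist_le (p.map φ)

theorem finite_neighborSet_mulCayley {s : Set G} (hs : s.Finite) (x : G) :
    ((SimpleGraph.mulCayley s).neighborSet x).Finite := by
  refine ((hs.union hs.inv).image (x * ·)).subset fun y hy => ⟨x⁻¹ * y, ?_, by group⟩
  simpa using ((SimpleGraph.mulCayley_adj s x y).1 hy).2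

theorem reachable_mulCayley_mul {s : Set G} {g : G} (hg : g ∈ Subgroup.closure s) (x : G) :
    (SimpleGraph.mulCayley s).Reachable x (x * g) := by
  have hstep : ∀ y, ∀ a ∈ s, (SimpleGraph.mulCayley s).Reachable y (y * a) := by
    intro y a ha
    by_cases hya : y = y * a
    · rw [← hya]
    · exact ((SimpleGraph.mulCayley_adj' s _ _).2 ⟨hya, a, ha, .inl rfl⟩).reachable
  induction hg using Subgroup.closure_induction_right with
  | one => rw [mul_one]
  | mul_right g _ a ha ih => exact ih.trans (mul_assoc x g a ▸ hstep (x * g) a ha)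
  | mul_inv_cancel g _ a ha ih =>
    exact ih.trans (by simpa [mul_assoc] using (hstep (x * (g * a⁻¹)) a ha).symm)

theorem infinite_supp_mulCayley {s : Set G} (hs : (Subgroup.closure s : Set G).Infinite)
    (c : (SimpleGraph.mulCayley s).ConnectedComponent) : c.supp.Infinite := by
  induction c using SimpleGraph.ConnectedComponent.ind with
  | h x =>
    refine (hs.image (mul_right_injective x).injOn).mono ?_
    rintro _ ⟨g, hg, rfl⟩
    exact SimpleGraph.ConnectedComponent.sound (reachable_mulCayley_mul hg x).symm

/-- The displacements `x⁻¹ * y` between `r`-equivalent elements `x` and `y`. A partition has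
uniformly bounded pieces with respect to the translations of `G` when this set is finite. -/
def displacements (r : Setoid G) : Set G :=
  {g | ∃ x, r (x * g) x}

theorem inv_mul_mem_displacements {r : Setoid G} {x y : G} (h : r y x) :
    x⁻¹ * y ∈ displacements r :=
  ⟨x, by rwa [mul_inv_cancel_left]⟩

/-- A partition of `G`, encoded as an equivalence relation, into sets of `n` elements of which only
finitely many occur up to translation. -/
structure IsBoundedEquipartition (r : Setoid G) (n : ℕ) : Prop where
  finite_displacements : (displacements r).Finite
  ncard_class : ∀ x, {y | r y x}.ncard = n

theorem exists_isBoundedEquipartition_of_infinite_closure {s : Set G} (hs : s.Finite)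
    (hinf : (Subgroup.closure s : Set G).Infinite) {n : ℕ} (hn : 0 < n) :
    ∃ r : Setoid G, IsBoundedEquipartition r n := by
  have hG := finite_neighborSet_mulCayley hs
  obtain ⟨r, hr⟩ :=
    exists_setoid_ncard_class_eq_and_subset_ball hG (infinite_supp_mulCayley hinf) hn
  refine ⟨r, (finite_ball_of_finite_neighborSet hG 1 (2 * n)).subset ?_, fun x => (hr x).1⟩
  rintro g ⟨x, hx⟩
  have hball : (SimpleGraph.mulCayley s).edist (x * g) (x * 1) < (2 * n : ℕ) := by
    simpa using (hr x).2 hx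
  simpa using (edist_mulCayley_mul_left_le s x⁻¹ (x * g) (x * 1)).trans_lt hball

theorem isBoundedEquipartition_leftRel (H : Subgroup G) [Finite H] :
    IsBoundedEquipartition (QuotientGroup.leftRel H) (Nat.card H) where
  finite_displacements := (H : Set G).toFinite.subset <| by
    rintro g ⟨x, hx⟩
    simpa using QuotientGroup.leftRel_apply.1 ((QuotientGroup.leftRel H).symm hx)
  ncard_class x := by
    have hcoset : {y | QuotientGroup.leftRel H y x} = x • (H : Set G) := Set.ext fun y => by
      rw [Set.mem_smul_set_iff_inv_smul_mem]
      exact (Setoid.comm' _).trans QuotientGroup.leftRel_apply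
    rw [hcoset, Set.ncard_smul_set]
    exact Nat.card_coe_set_eq _

theorem finite_displacements_comap {r : Setoid G} (hr : (displacements r).Finite)
    {π : Equiv.Perm G} (hπ : {x | π x ≠ x}.Finite) : (displacements (r.comap π)).Finite := by
  let shift : G → G := fun x => x⁻¹ * π x
  have hfin : (Set.range shift).Finite := by
    refine ((hπ.image shift).insert 1).subset ?_
    rintro _ ⟨x, rfl⟩
    by_cases hx : π x = x
    · simp [shift, hx]
    · exact .inr ⟨x, hx, rfl⟩
  refine ((hfin.mul hr).mul hfin.inv).subset ?_
  rintro g ⟨x, hx⟩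
  have hg : g = shift x * ((π x)⁻¹ * π (x * g)) * (shift (x * g))⁻¹ := by
    simp only [shift]
    group
  rw [hg]
  exact Set.mul_mem_mul
    (Set.mul_mem_mul (Set.mem_range_self x) (inv_mul_mem_displacements (r := r) hx))
    (Set.inv_mem_inv.2 (Set.mem_range_self (x * g)))

theorem IsBoundedEquipartition.comap {r : Setoid G} {n : ℕ} (hr : IsBoundedEquipartition r n)
    {π : Equiv.Perm G} (hπ : {x | π x ≠ x}.Finite) : IsBoundedEquipartition (r.comap π) n where
  finite_displacements := finite_displacements_comap hr.finite_displacements hπ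
  ncard_class x := by
    rw [← hr.ncard_class (π x)]
    exact Set.ncard_preimage_of_injective_subset_range (s := {y | r y (π x)}) π.injective (by simp)

theorem IsBoundedEquipartition.exists_subset_class_one {r : Setoid G} {F : Finset G}
    (hr : IsBoundedEquipartition r F.card) (hF : 1 ∈ F) :
    ∃ r' : Setoid G, IsBoundedEquipartition r' F.card ∧ (F : Set G) ⊆ {y | r' y 1} := by
  have hfin : {y | r y 1}.Finite :=
    Set.finite_of_ncard_pos (hr.ncard_class 1 ▸ Finset.card_pos.2 ⟨1, hF⟩)
  obtain ⟨π, hπ, hmaps⟩ := exists_perm_finite_support_mapsTo (s := F) (t := hfin.toFinset)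
    (by rw [← Set.ncard_eq_toFinset_card _ hfin, hr.ncard_class])
  have hclass : ∀ y ∈ F, r (π y) 1 := fun y hy => by simpa using hmaps hy
  exact ⟨r.comap π, hr.comap hπ, fun y hy => r.trans (hclass y hy) (r.symm (hclass 1 hF))⟩

theorem exists_isBoundedEquipartition_subset_class_one (F : Finset G) :
    ∃ (r : Setoid G) (n : ℕ), IsBoundedEquipartition r n ∧ (F : Set G) ⊆ {y | r y 1} := by
  classical
  rcases finite_or_infinite (Subgroup.closure (F : Set G)) with _ | hinf
  · refine ⟨_, _, isBoundedEquipartition_leftRel (Subgroup.closure (F : Set G)), fun y hy => ?_⟩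
    exact (QuotientGroup.leftRel _).symm
      (QuotientGroup.leftRel_apply.2 (by simpa using Subgroup.subset_closure hy))
  · have h1 : 1 ∈ insert 1 F := Finset.mem_insert_self 1 F
    obtain ⟨r, hr⟩ := exists_isBoundedEquipartition_of_infinite_closure F.finite_toSet
      (Set.infinite_coe_iff.1 hinf) (Finset.card_pos.2 ⟨1, h1⟩)
    obtain ⟨r', hr', hF⟩ := hr.exists_subset_class_one h1
    exact ⟨r', _, hr', (Finset.coe_subset.2 (Finset.subset_insert 1 F)).trans hF⟩

theorem exists_polytiling_of_translates {ι : Type*} (c : ι → G) {T : ι → Finset G}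
    (hfin : (Set.range T).Finite) (hone : ∀ i, 1 ∈ T i)
    (hdisj : Pairwise (Function.onFun Disjoint fun i => c i • (T i : Set G)))
    (hcover : ∀ g, ∃ i, g ∈ c i • (T i : Set G)) (i₀ : ι) :
    ∃ P : Polytiling G,
      P.pieces = Set.range (fun i => c i • (T i : Set G)) ∧ P.T P.fst = T i₀ := by
  have := hfin.to_subtype
  obtain ⟨k, hk, e, he⟩ := exists_equiv_fin_apply_zero_eq (⟨T i₀, i₀, rfl⟩ : Set.range T)
  let P : Polytiling G :=
    { k := k
      k_pos := hk
      T := fun a => e a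
      Δ := fun a => {g | ∃ i, T i = e a ∧ c i = g}
      one_mem := fun a => by
        obtain ⟨i, hi⟩ := (e a).2
        exact hi ▸ hone i
      delta_nonempty := fun a => by
        obtain ⟨i, hi⟩ := (e a).2
        exact ⟨c i, i, hi, rfl⟩
      covers := fun g => by
        obtain ⟨i, hi⟩ := hcover g
        exact ⟨e.symm ⟨T i, i, rfl⟩, c i, ⟨i, by simp, rfl⟩, by simpa using hi⟩
      disj := by
        rintro a b _ ⟨i, hi, rfl⟩ _ ⟨j, hj, rfl⟩ hne
        rw [← hi, ← hj]
        refine hdisj fun hij => hne ?_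
        subst hij
        rw [e.injective (Subtype.ext (hi.symm.trans hj))] }
  refine ⟨P, Set.ext fun A => ⟨?_, ?_⟩, congrArg Subtype.val he⟩
  · rintro ⟨a, _, ⟨i, hi, rfl⟩, rfl⟩
    exact ⟨i, congrArg (fun S : Finset G => c i • (S : Set G)) hi⟩
  · rintro ⟨i, rfl⟩
    exact ⟨e.symm ⟨T i, i, rfl⟩, c i, ⟨i, by simp, rfl⟩, by simp [P]⟩

theorem exists_polytiling_pieces_eq_classes {r : Setoid G} (hr : (displacements r).Finite) :
    ∃ P : Polytiling G, P.pieces = r.classes ∧ (P.T P.fst : Set G) = {y | r y 1} := by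
  classical
  obtain ⟨rep, hrep, hrep1⟩ := exists_quotient_section_apply_eq r 1
  let T : Quotient r → Finset G := fun q => hr.toFinset.filter fun g => r (rep q * g) (rep q)
  have hT : ∀ q, rep q • (T q : Set G) = {y | r y (rep q)} := fun q => Set.ext fun y => by
    rw [Set.mem_smul_set_iff_inv_smul_mem]
    simpa [T] using inv_mul_mem_displacements (r := r)
  have hmem : ∀ q y, y ∈ rep q • (T q : Set G) ↔ ⟦y⟧ = q := fun q y => by
    rw [hT]
    exact ⟨fun h => (Quotient.sound h).trans (hrep q),
      fun h => Quotient.exact (h.trans (hrep q).symm)⟩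
  obtain ⟨P, hP, hP1⟩ := exists_polytiling_of_translates rep (T := T)
    (hr.toFinset.powerset.finite_toSet.subset <| by
      rintro _ ⟨q, rfl⟩
      exact Finset.mem_coe.2 (Finset.mem_powerset.2 (Finset.filter_subset _ _)))
    (fun q => Finset.mem_coe.1 <| by
      simpa using Set.mem_smul_set_iff_inv_smul_mem.1 ((hmem q (rep q)).2 (hrep q)))
    (fun p q hpq => Set.disjoint_left.2 fun y hy hy' =>
      hpq (((hmem p y).1 hy).symm.trans ((hmem q y).1 hy')))
    (fun g => ⟨⟦g⟧, (hmem _ g).2 rfl⟩) ⟦1⟧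
  refine ⟨P, hP.trans (Set.Subset.antisymm ?_ ?_), ?_⟩
  · rintro _ ⟨q, rfl⟩
    exact ⟨rep q, hT q⟩
  · rintro _ ⟨x, rfl⟩
    exact ⟨⟦x⟧, Set.ext fun y => (hmem _ y).trans Quotient.eq⟩
  · simpa only [hP1, hrep1, one_smul] using hT ⟦1⟧

theorem Polytiling.fair_of_ncard_pieces_eq {P : Polytiling G} {n : ℕ}
    (h : ∀ A ∈ P.pieces, A.ncard = n) : P.Fair := by
  have hcard : ∀ i, (P.T i).card = n := fun i => by
    obtain ⟨δ, hδ⟩ := P.delta_nonempty i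
    rw [← h _ ⟨i, δ, hδ, rfl⟩, Set.ncard_smul_set, Set.ncard_coe_finset]
  exact fun i j => (hcard i).trans (hcard j).symm

theorem countable_group_is_poly_MT_general (G : Type*) [Group G] (F : Finset G) :
    ∃ P : Polytiling G, P.Fair ∧ (F : Set G) ⊆ ((P.T P.fst : Finset G) : Set G) := by
  obtain ⟨r, n, hr, hF⟩ := exists_isBoundedEquipartition_subset_class_one F
  obtain ⟨P, hpieces, hfst⟩ := exists_polytiling_pieces_eq_classes hr.finite_displacements
  refine ⟨P, P.fair_of_ncard_pieces_eq (n := n) ?_, hF.trans_eq hfst.symm⟩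
  rw [hpieces]
  rintro _ ⟨x, rfl⟩
  exact hr.ncard_class x

end Group

/-- Every countable group is poly-MT: every finite subset is contained in the first tile
of some fair polytile. -/
theorem countable_group_is_poly_MT (G : Type*) [Group G] [Countable G] (F : Finset G) :
    ∃ P : Polytiling G, P.Fair ∧ (F : Set G) ⊆ ((P.T P.fst : Finset G) : Set G) :=
  countable_group_is_poly_MT_general G F
end

section
/- Let G be a countable group that is not locally finite. Then for every integer n ≥ 1 there is a fair polytile (T₁,…,T_k) of G with |T₁| = n. Moreover, for every finite subset F ⊆ G there exists N such that for every n ≥ N there is a fair polytile (T₁,…,T_k) of G with F ⊆ T₁ and |T₁| = n. -/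
open scoped Pointwise

/-!
A partition of `G` into sets of size `n`, given by a `Setoid`, yields a fair polytiling as soon as
`x⁻¹ * y` stays in a finite set for equivalent `x` and `y`: choose a representative in each class
and translate the classes so that the representatives move to `1`; only finitely many tiles occur.

Some finitely generated subgroup `H` containing `F` is infinite. In its Cayley graph we look for a
partition into sets of size `n` and bounded diameter, one of which contains `F ∪ {1}`; a left
transversal of `H` then carries it over to `G`. By Rado's selection principle it is enough to find
such partitions around each finite set of vertices, with a uniform bound on the diameters. Contract
`F ∪ {1}` to a point. By Sekanina's theorem, finitely many vertices can be listed, among others and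
in any large number, starting with this point and with consecutive distances at most `3`. Replace
the first entry by the elements of `F ∪ {1}` and cut the list into blocks of length `n`.
-/

section Sekanina

variable {V : Type*} {G : SimpleGraph V} {l : List V} {u v : V}

/-- The distance allowed between consecutive entries `(a, i)` and `(b, j)` of a Sekanina ordering,
where the flag of a vertex is `true` if it is listed after its descendants (odd depth) and `false`
if it is listed before them (even depth). -/
def SekaninaStep (G : SimpleGraph V) (a b : V × Bool) : Prop :=
  G.dist a.1 b.1 ≤ 1 + a.2.toNat + (!b.2).toNat

/-- An enumeration of finitely many vertices starting at `v`, as in Sekanina's theorem that the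
cube of a connected graph has a Hamiltonian path: a tree rooted at `v` is traversed so that the
vertices of even depth precede, and those of odd depth follow, their descendants. Only the parities
of the depths are recorded. -/
def IsSekaninaOrdering (G : SimpleGraph V) (v : V) (l : List V) : Prop :=
  l.Nodup ∧ ∃ L : List (V × Bool), L.map Prod.fst = l ∧ L.head? = some (v, false) ∧
    L.IsChain (SekaninaStep G)

theorem isSekaninaOrdering_singleton (G : SimpleGraph V) (v : V) :
    IsSekaninaOrdering G v [v] :=
  ⟨List.nodup_singleton v, [(v, false)], rfl, rfl, List.isChain_singleton _⟩

theorem IsSekaninaOrdering.head?_eq (hl : IsSekaninaOrdering G u l) : l.head? = some u := by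
  obtain ⟨-, L, rfl, hhead, -⟩ := hl
  simp [hhead]

theorem IsSekaninaOrdering.mem (hl : IsSekaninaOrdering G u l) : u ∈ l :=
  List.mem_of_head? hl.head?_eq

theorem SekaninaStep.of_adj_left (hG : G.Connected) {p v : V} {b : V × Bool} (hpv : G.Adj p v)
    (h : SekaninaStep G (p, false) b) : SekaninaStep G (v, true) b := by
  have hvp : G.dist v p = 1 := SimpleGraph.dist_eq_one_iff_adj.2 hpv.symm
  have htri := hG.dist_triangle (u := v) (v := p) (w := b.1)
  simp only [SekaninaStep, Bool.toNat_false, Bool.toNat_true] at h ⊢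
  lia

theorem SekaninaStep.of_adj_right (hG : G.Connected) {p v : V} {a : V × Bool} (hpv : G.Adj p v)
    (h : SekaninaStep G a (p, true)) : SekaninaStep G a (v, false) := by
  have hpv' : G.dist p v = 1 := SimpleGraph.dist_eq_one_iff_adj.2 hpv
  have htri := hG.dist_triangle (u := a.1) (v := p) (w := v)
  simp only [SekaninaStep, Bool.not_true, Bool.not_false, Bool.toNat_false, Bool.toNat_true] at h ⊢
  lia

theorem IsSekaninaOrdering.exists_insert (hG : G.Connected) (hl : IsSekaninaOrdering G u l)
    {p : V} (hp : p ∈ l) (hv : v ∉ l) (hpv : G.Adj p v) :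
    ∃ l', IsSekaninaOrdering G u l' ∧ l'.Perm (v :: l) := by
  obtain ⟨hnodup, L, rfl, hhead, hchain⟩ := hl
  suffices ∃ L' : List (V × Bool), L'.head? = some (u, false) ∧ L'.IsChain (SekaninaStep G) ∧
      (L'.map Prod.fst).Perm (v :: L.map Prod.fst) by
    obtain ⟨L', hhead', hchain', hperm⟩ := this
    exact ⟨_, ⟨hperm.nodup_iff.2 (List.nodup_cons.2 ⟨hv, hnodup⟩), L', rfl, hhead', hchain'⟩, hperm⟩
  obtain ⟨⟨p, i⟩, hpL, rfl⟩ := List.mem_map.1 hp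
  obtain ⟨s, t, rfl⟩ := List.append_of_mem hpL
  have hstep : G.dist p v = 1 := SimpleGraph.dist_eq_one_iff_adj.2 hpv
  -- As a child of `p`, the vertex `v` is listed next to `p`, on the side of the descendants of `p`.
  cases i with
  | false =>
    refine ⟨s ++ (p, false) :: (v, true) :: t, by cases s <;> simpa using hhead, ?_, ?_⟩
    · rw [List.isChain_split] at hchain ⊢
      refine ⟨hchain.1, List.isChain_cons_cons.2 ⟨by simp [SekaninaStep, hstep], ?_⟩⟩
      exact hchain.2.imp_head fun h ↦ h.of_adj_left hG hpv
    · simpa using List.perm_middle (a := v) (l₁ := s.map Prod.fst ++ [p]) (l₂ := t.map Prod.fst)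
  | true =>
    have hs : s ≠ [] := by rintro rfl; simp at hhead
    refine ⟨s ++ (v, false) :: (p, true) :: t, ?_, ?_, by simp⟩
    · rwa [List.head?_append_of_ne_nil _ hs] at hhead ⊢
    · rw [List.isChain_split, List.isChain_append] at hchain
      rw [List.isChain_split, List.isChain_append]
      obtain ⟨⟨hs, -, hlast⟩, ht⟩ := hchain
      refine ⟨⟨hs, List.isChain_singleton _, fun a ha b hb ↦ ?_⟩, List.isChain_cons_cons.2
        ⟨by simp [SekaninaStep, G.dist_comm (u := v), hstep], ht⟩⟩
      obtain rfl : (v, false) = b := by simpa using hb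
      exact (hlast a ha _ rfl).of_adj_right hG hpv

theorem IsSekaninaOrdering.exists_superset_mem (hG : G.Connected) (hl : IsSekaninaOrdering G u l)
    (v : V) : ∃ l', IsSekaninaOrdering G u l' ∧ l ⊆ l' ∧ v ∈ l' := by
  suffices ∀ {a : V} (_ : G.Walk a v) {l : List V}, IsSekaninaOrdering G u l → a ∈ l →
      ∃ l', IsSekaninaOrdering G u l' ∧ l ⊆ l' ∧ v ∈ l' from
    this (hG.preconnected u v).some hl hl.mem
  intro a walk
  induction walk with
  | nil => exact fun hl ha ↦ ⟨_, hl, List.Subset.refl _, ha⟩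
  | @cons a b _ hab _ ih =>
    intro l hl ha
    by_cases hb : b ∈ l
    · exact ih hl hb
    · obtain ⟨l₁, hl₁, hperm⟩ := hl.exists_insert hG ha hb hab
      obtain ⟨l₂, hl₂, hsub, hv⟩ := ih hl₁ (hperm.mem_iff.2 List.mem_cons_self)
      exact ⟨l₂, hl₂, fun x hx ↦ hsub (hperm.mem_iff.2 (List.mem_cons_of_mem _ hx)), hv⟩

theorem exists_isSekaninaOrdering_superset (hG : G.Connected) (v : V) (s : Finset V) :
    ∃ l, IsSekaninaOrdering G v l ∧ ∀ x ∈ s, x ∈ l := by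
  induction s using Finset.cons_induction with
  | empty => exact ⟨[v], isSekaninaOrdering_singleton G v, by simp⟩
  | cons a s _ ih =>
    obtain ⟨l, hl, hs⟩ := ih
    obtain ⟨l', hl', hsub, ha⟩ := hl.exists_superset_mem hG a
    exact ⟨l', hl', Finset.forall_mem_cons _ _ |>.2 ⟨ha, fun x hx ↦ hsub (hs x hx)⟩⟩

theorem IsSekaninaOrdering.exists_superset_length_eq [Infinite V] (hG : G.Connected)
    (hl : IsSekaninaOrdering G u l) {m : ℕ} (hm : l.length ≤ m) :
    ∃ l', IsSekaninaOrdering G u l' ∧ l ⊆ l' ∧ l'.length = m := by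
  classical
  induction m, hm using Nat.le_induction with
  | base => exact ⟨l, hl, List.Subset.refl l, rfl⟩
  | succ m _ ih =>
    obtain ⟨l₁, hl₁, hsub, rfl⟩ := ih
    obtain ⟨z, hz⟩ := Infinite.exists_notMem_finset l₁.toFinset
    obtain ⟨walk⟩ := hG.preconnected u z
    obtain ⟨d, -, hfst, hsnd⟩ :=
      walk.exists_boundary_dart {x | x ∈ l₁} hl₁.mem (by simpa using hz)
    obtain ⟨l₂, hl₂, hperm⟩ := hl₁.exists_insert hG hfst hsnd d.adj
    exact ⟨l₂, hl₂, fun x hx ↦ hperm.mem_iff.2 (List.mem_cons_of_mem _ (hsub hx)),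
      hperm.length_eq⟩

theorem IsSekaninaOrdering.isChain_dist_le_three (hl : IsSekaninaOrdering G u l) :
    l.IsChain (G.dist · · ≤ 3) := by
  obtain ⟨-, L, rfl, -, hchain⟩ := hl
  refine (List.isChain_map Prod.fst).2 (hchain.imp fun a b hab ↦ hab.trans ?_)
  have := a.2.toNat_le
  have := (!b.2).toNat_le
  lia

theorem exists_list_isChain_dist_le_three [Infinite V] (hG : G.Connected) (v : V) (s : Finset V) :
    ∃ N, ∀ m ≥ N, ∃ l : List V, l.Nodup ∧ l.length = m ∧ l.head? = some v ∧ (∀ x ∈ s, x ∈ l) ∧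
      l.IsChain (G.dist · · ≤ 3) := by
  obtain ⟨l₀, hl₀, hs⟩ := exists_isSekaninaOrdering_superset hG v s
  refine ⟨l₀.length, fun m hm ↦ ?_⟩
  obtain ⟨l, hl, hsub, hlen⟩ := hl₀.exists_superset_length_eq hG hm
  exact ⟨l, hl.1, hlen, hl.head?_eq, fun x hx ↦ hsub (hs x hx), hl.isChain_dist_le_three⟩

end Sekanina

section GraphMetric

variable {V W : Type*} {G : SimpleGraph V} {H : SimpleGraph W}

theorem dist_map_le_mul_dist (hG : G.Connected) (hH : H.Connected) {f : V → W} {C : ℕ}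
    (hf : ∀ ⦃x y⦄, G.Adj x y → H.dist (f x) (f y) ≤ C) (x y : V) :
    H.dist (f x) (f y) ≤ C * G.dist x y := by
  obtain ⟨p, hp⟩ := hG.exists_walk_length_eq_dist x y
  rw [← hp]
  clear hp
  induction p with
  | nil => simp
  | @cons x y z hxy p ih =>
    calc H.dist (f x) (f z) ≤ H.dist (f x) (f y) + H.dist (f y) (f z) := hH.dist_triangle
      _ ≤ C + C * p.length := add_le_add (hf hxy) ih
      _ = C * (p.cons hxy).length := by rw [SimpleGraph.Walk.length_cons]; ring

theorem connected_of_surjective (hG : G.Connected) {f : V → W} (hf : f.Surjective)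
    (hadj : ∀ ⦃x y⦄, G.Adj x y → f x = f y ∨ H.Adj (f x) (f y)) : H.Connected := by
  have hreach (x y : V) : H.Reachable (f x) (f y) := by
    obtain ⟨p⟩ := hG.preconnected x y
    induction p with
    | nil => exact .rfl
    | cons hxy _ ih => exact ((hadj hxy).elim (fun h ↦ h ▸ .rfl) (·.reachable)).trans ih
  have := hG.nonempty.map f
  exact ⟨hf.forall₂.2 hreach⟩

theorem finite_setOf_dist_le (hG : G.Connected) (hfin : ∀ v, (G.neighborSet v).Finite) (v : V)
    (r : ℕ) : {w | G.dist v w ≤ r}.Finite := by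
  induction r with
  | zero => simp [hG.dist_eq_zero_iff]
  | succ r ih =>
    refine (ih.union (ih.biUnion fun w _ ↦ hfin w)).subset fun w hw ↦ ?_
    obtain ⟨p, hp⟩ := hG.exists_walk_length_eq_dist w v
    rw [Set.mem_ofPred_eq, G.dist_comm, ← hp] at hw
    cases p with
    | nil => simp
    | @cons _ u _ hwu p =>
      refine Or.inr (Set.mem_biUnion (x := u) ?_ hwu.symm)
      rw [SimpleGraph.Walk.length_cons] at hw
      exact G.dist_comm.trans_le ((G.dist_le p).trans (by lia))

end GraphMetric

section Uncontract

/-- Turns a list of points of the set obtained from `α` by contracting `E` to its element `e` into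
a list in `α`, by putting the other elements of `E` in front. -/
noncomputable def uncontract {α : Type*} [DecidableEq α] {E : Finset α} {e : α}
    (l : List {v // v ∈ E → v = e}) : List α :=
  (E.erase e).toList ++ l.map Subtype.val

variable {α : Type*} [DecidableEq α] {E : Finset α} {e x : α} {l : List {v // v ∈ E → v = e}}

theorem nodup_uncontract (hl : l.Nodup) : (uncontract l).Nodup := by
  refine (Finset.nodup_toList _).append (hl.map Subtype.val_injective) fun x hx hx' ↦ ?_
  obtain ⟨hne, hxE⟩ := Finset.mem_erase.1 (Finset.mem_toList.1 hx)
  obtain ⟨w, -, rfl⟩ := List.mem_map.1 hx'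
  exact hne (w.2 hxE)

theorem length_uncontract (l : List {v // v ∈ E → v = e}) :
    (uncontract l).length = (E.erase e).card + l.length := by
  simp [uncontract]

theorem mem_uncontract (h : ∀ hx : x ∈ E → x = e, ⟨x, hx⟩ ∈ l) : x ∈ uncontract l := by
  by_cases hx : x ∈ E.erase e
  · exact List.mem_append_left _ (Finset.mem_toList.2 hx)
  · refine List.mem_append_right _ (List.mem_map_of_mem (h fun hxE ↦ ?_))
    by_contra hne
    exact hx (Finset.mem_erase.2 ⟨hne, hxE⟩)

theorem mem_take_uncontract (he : e ∈ E) (hl : l.head? = some ⟨e, fun _ ↦ rfl⟩) (hx : x ∈ E) :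
    x ∈ (uncontract l).take E.card := by
  obtain ⟨t, rfl⟩ := List.head?_eq_some_iff.1 hl
  rw [uncontract, ← Finset.card_erase_add_one he, List.map_cons, List.append_cons,
    List.take_left' (by simp)]
  by_cases h : x = e <;> simp [h, hx]

theorem isChain_uncontract {R : α → α → Prop} (he : e ∈ E) (hR : ∀ x ∈ E, ∀ y ∈ E, R x y)
    (hhead : l.head? = some ⟨e, fun _ ↦ rfl⟩) (hl : l.IsChain (R ·.1 ·.1)) :
    (uncontract l).IsChain R := by
  have hmem {x : α} (hx : x ∈ (E.erase e).toList) : x ∈ E :=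
    Finset.mem_of_mem_erase (Finset.mem_toList.1 hx)
  refine List.isChain_append.2 ⟨?_, (List.isChain_map _).2 hl, fun x hx y hy ↦ ?_⟩
  · exact (List.pairwise_of_forall_mem_list fun x hx y hy ↦ hR x (hmem hx) y (hmem hy)).isChain
  · rw [List.head?_map, hhead] at hy
    obtain rfl : e = y := by simpa using hy
    exact hR x (hmem (List.mem_of_mem_getLast? hx)) e he

end Uncontract

section Contraction

variable {V : Type*} {G : SimpleGraph V}

theorem exists_dist_le_of_finset (G : SimpleGraph V) (E : Finset V) :
    ∃ d, ∀ x ∈ E, ∀ y ∈ E, G.dist x y ≤ d :=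
  ⟨E.sup fun x ↦ E.sup (G.dist x), fun x hx _ hy ↦
    (Finset.le_sup (f := G.dist x) hy).trans (Finset.le_sup (f := fun x ↦ E.sup (G.dist x)) hx)⟩

theorem exists_connected_dist_le_of_contract (hG : G.Connected) {E : Finset V} {e : V}
    (he : e ∈ E) : ∃ (H : SimpleGraph {v // v ∈ E → v = e}) (C : ℕ),
      H.Connected ∧ ∀ ⦃v w⦄, H.Adj v w → G.dist v w ≤ C := by
  classical
  obtain ⟨d, hd⟩ := exists_dist_le_of_finset G E
  let f (v : V) : {v // v ∈ E → v = e} :=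
    if hv : v ∈ E then ⟨e, fun _ ↦ rfl⟩ else ⟨v, fun h ↦ (hv h).elim⟩
  have hf (v : V) : G.dist v (f v) ≤ d := by
    by_cases hv : v ∈ E
    · simpa [f, hv] using hd v hv e he
    · simp [f, hv]
  have hf_surj : f.Surjective := by
    rintro ⟨v, hv⟩
    refine ⟨v, Subtype.ext ?_⟩
    by_cases h : v ∈ E
    · simp [f, he, hv h]
    · simp [f, h]
  have hf_adj {x y : V} (hxy : G.Adj x y) : G.dist (f x) (f y) ≤ 2 * d + 1 := by
    calc G.dist (f x) (f y) ≤ G.dist (f x) x + G.dist x (f y) := hG.dist_triangle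
      _ ≤ G.dist (f x) x + (G.dist x y + G.dist y (f y)) := by gcongr; exact hG.dist_triangle
      _ ≤ d + (1 + d) := by
        rw [SimpleGraph.dist_eq_one_iff_adj.2 hxy, G.dist_comm]
        gcongr <;> exact hf _
      _ = 2 * d + 1 := by ring
  refine ⟨.fromRel fun v w ↦ G.dist v w ≤ 2 * d + 1, 2 * d + 1, ?_, fun v w h ↦ ?_⟩
  · exact connected_of_surjective hG hf_surj fun x y hxy ↦
      or_iff_not_imp_left.2 fun hne ↦ ⟨hne, .inl (hf_adj hxy)⟩
  · exact h.2.elim id fun h ↦ G.dist_comm.trans_le h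

theorem infinite_subtype_mem_imp_eq {α : Type*} [Infinite α] (E : Finset α) (e : α) :
    Infinite {v // v ∈ E → v = e} :=
  (E.finite_toSet.infinite_compl.mono fun _ hv h ↦ (hv h).elim).to_subtype

theorem exists_list_isChain_mem_take [Infinite V] (hG : G.Connected) {E : Finset V}
    (hE : E.Nonempty) : ∃ D : ℕ, ∀ s : Finset V, ∃ N, ∀ m ≥ N, ∃ l : List V, l.Nodup ∧
      l.length = m ∧ (∀ x ∈ s, x ∈ l) ∧ (∀ x ∈ E, x ∈ l.take E.card) ∧
      l.IsChain (G.dist · · ≤ D) := by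
  classical
  obtain ⟨e, he⟩ := hE
  obtain ⟨d, hd⟩ := exists_dist_le_of_finset G E
  obtain ⟨H, C, hH, hHG⟩ := exists_connected_dist_le_of_contract hG he
  have := infinite_subtype_mem_imp_eq E e
  refine ⟨max d (C * 3), fun s ↦ ?_⟩
  obtain ⟨N, hN⟩ := exists_list_isChain_dist_le_three hH ⟨e, fun _ ↦ rfl⟩ (s.subtype _)
  refine ⟨(E.erase e).card + N, fun m hm ↦ ?_⟩
  obtain ⟨l, hnodup, hlen, hhead, hs, hchain⟩ := hN (m - (E.erase e).card) (by lia)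
  refine ⟨uncontract l, nodup_uncontract hnodup, ?_, fun x hx ↦ ?_, fun x hx ↦
    mem_take_uncontract he hhead hx, isChain_uncontract he ?_ hhead ?_⟩
  · rw [length_uncontract, hlen]
    lia
  · exact mem_uncontract fun hxE ↦ hs ⟨x, hxE⟩ (Finset.mem_subtype.2 hx)
  · exact fun x hx y hy ↦ (hd x hx y hy).trans (le_max_left _ _)
  · exact hchain.imp fun v w hvw ↦ (dist_map_le_mul_dist hH hG hHG v w).trans
      ((Nat.mul_le_mul_left C hvw).trans (le_max_right _ _))

end Contraction

theorem exists_setoid_of_finset {α : Type*} {N : α → Set α} (hN : ∀ x, (N x).Finite)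
    (R : Finset α → Setoid α) (hR : ∀ s x y, R s x y → y ∈ N x) :
    ∃ r : Setoid α, ∀ s : Finset α, ∃ t, s ⊆ t ∧ ∀ x ∈ s, ∀ y, r x y ↔ R t x y := by
  classical
  have (x : α) : Finite (𝒫 N x) := (hN x).powerset
  obtain ⟨χ, hχ⟩ := Finset.rado_selection (β := fun x ↦ 𝒫 N x)
    fun s x ↦ ⟨{y | R s x y}, fun y ↦ hR s x y⟩
  have hself (x : α) : x ∈ (χ x).1 := by
    obtain ⟨t, -, ht⟩ := hχ {x}
    rw [ht x (Finset.mem_singleton_self x)]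
    exact (R t).refl x
  refine ⟨Setoid.ker fun x ↦ (χ x).1, fun s ↦ ?_⟩
  obtain ⟨t, hst, ht⟩ := hχ (s ∪ s.biUnion fun x ↦ (hN x).toFinset)
  refine ⟨t, Finset.subset_union_left.trans hst, fun x hx y ↦ ?_⟩
  have hχx := ht x (Finset.mem_union_left _ hx)
  constructor
  · intro hxy
    have hy : y ∈ (χ x).1 := by
      rw [Setoid.ker_def.1 hxy]
      exact hself y
    rwa [hχx] at hy
  · intro hxy
    have hy := ht y (Finset.mem_union_right _
      (Finset.mem_biUnion.2 ⟨x, hx, (hN x).mem_toFinset.2 (hR t x y hxy)⟩))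
    rw [Setoid.ker_def, hχx, hy]
    exact Set.ext fun z ↦ ⟨(R t).trans ((R t).symm hxy), (R t).trans hxy⟩

section Blocks

variable {α : Type*} {l : List α} {n : ℕ}

open Classical in
/-- The partition of `α` into the blocks of `n` consecutive entries of the list `l`, the last of
which may be shorter, and the singletons outside `l`. -/
noncomputable def blockSetoid (l : List α) (n : ℕ) : Setoid α :=
  .ker fun x ↦ if x ∈ l then Sum.inl (l.idxOf x / n) else Sum.inr x

theorem blockSetoid_getElem_iff (hl : l.Nodup) {i j : ℕ} (hi : i < l.length) (hj : j < l.length) :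
    blockSetoid l n l[i] l[j] ↔ i / n = j / n := by
  classical
  rw [blockSetoid, Setoid.ker_def]
  simp [hl.idxOf_getElem]

theorem eq_or_mem_of_blockSetoid {x y : α} (h : blockSetoid l n x y) : x = y ∨ x ∈ l ∧ y ∈ l := by
  rw [blockSetoid, Setoid.ker_def] at h
  by_cases hx : x ∈ l <;> by_cases hy : y ∈ l <;> simp_all

theorem ncard_setOf_blockSetoid (hl : l.Nodup) (hn : n ∣ l.length) {x : α} (hx : x ∈ l) :
    {y | blockSetoid l n x y}.ncard = n := by
  obtain ⟨i, hi, rfl⟩ := List.mem_iff_getElem.1 hx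
  have hn0 : 0 < n := Nat.pos_of_dvd_of_pos hn (Nat.zero_lt_of_lt hi)
  have hlt {k : ℕ} (hk : k < n) : n * (i / n) + k < l.length := by
    obtain ⟨q, hq⟩ := hn
    rw [hq] at hi ⊢
    calc n * (i / n) + k < n * (i / n) + n := by gcongr
      _ = n * (i / n + 1) := by ring
      _ ≤ n * q := by gcongr; exact Nat.div_lt_of_lt_mul hi
  refine Set.ncard_eq_of_bijective (fun k hk ↦ l[n * (i / n) + k]'(hlt hk)) (fun y hy ↦ ?_)
    (fun k hk ↦ ?_) fun j k hj hk h ↦ Nat.add_left_cancel (hl.getElem_inj_iff.1 h)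
  · have hyl : y ∈ l := (eq_or_mem_of_blockSetoid hy).elim (· ▸ hx) (·.2)
    obtain ⟨j, hj, rfl⟩ := List.mem_iff_getElem.1 hyl
    refine ⟨j % n, Nat.mod_lt j hn0, ?_⟩
    simp only [(blockSetoid_getElem_iff hl hi hj).1 hy, Nat.div_add_mod]
  · refine (blockSetoid_getElem_iff hl hi (hlt hk)).2 ?_
    rw [Nat.mul_add_div hn0, Nat.div_eq_of_lt hk, add_zero]

theorem blockSetoid_of_mem_take (hl : l.Nodup) {x y : α} (hx : x ∈ l.take n) (hy : y ∈ l.take n) :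
    blockSetoid l n x y := by
  obtain ⟨i, hi, rfl⟩ := List.mem_take_iff_getElem.1 hx
  obtain ⟨j, hj, rfl⟩ := List.mem_take_iff_getElem.1 hy
  rw [lt_min_iff] at hi hj
  rw [blockSetoid_getElem_iff hl, Nat.div_eq_of_lt hi.1, Nat.div_eq_of_lt hj.1]

end Blocks

section BlockDiameter

variable {V : Type*} {G : SimpleGraph V} {D n : ℕ} {l : List V}

theorem dist_getElem_le_mul_of_isChain (hG : G.Connected) (hl : l.IsChain (G.dist · · ≤ D))
    {i j : ℕ} (hij : i ≤ j) (hj : j < l.length) : G.dist l[i] l[j] ≤ D * (j - i) := by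
  induction j, hij using Nat.le_induction with
  | base => simp
  | succ j hij ih =>
    calc G.dist l[i] l[j + 1] ≤ G.dist l[i] l[j] + G.dist l[j] l[j + 1] := hG.dist_triangle
      _ ≤ D * (j - i) + D := add_le_add (ih _) (List.isChain_iff_getElem.1 hl j hj)
      _ = D * (j + 1 - i) := by rw [Nat.succ_sub hij, Nat.mul_succ]

theorem dist_le_mul_of_blockSetoid (hG : G.Connected) (hnodup : l.Nodup)
    (hl : l.IsChain (G.dist · · ≤ D)) (hn : 0 < n) {x y : V} (h : blockSetoid l n x y) :
    G.dist x y ≤ D * n := by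
  obtain rfl | ⟨hx, hy⟩ := eq_or_mem_of_blockSetoid h
  · simp
  obtain ⟨i, hi, rfl⟩ := List.mem_iff_getElem.1 hx
  obtain ⟨j, hj, rfl⟩ := List.mem_iff_getElem.1 hy
  wlog hij : i ≤ j generalizing i j
  · rw [G.dist_comm]
    exact this j hj hy i hi hx ((blockSetoid l n).symm h) (le_of_not_ge hij)
  have hdiv : i / n = j / n := (blockSetoid_getElem_iff hnodup hi hj).1 h
  refine (dist_getElem_le_mul_of_isChain hG hl hij hj).trans (Nat.mul_le_mul_left D ?_)
  calc j - i = (n * (j / n) + j % n) - (n * (i / n) + i % n) := by simp only [Nat.div_add_mod]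
    _ ≤ j % n := by rw [hdiv]; lia
    _ ≤ n := (Nat.mod_lt j hn).le

end BlockDiameter

theorem exists_setoid_dist_le_of_connected {V : Type*} [Infinite V] {G : SimpleGraph V}
    (hG : G.Connected) (hfin : ∀ v, (G.neighborSet v).Finite) {E : Finset V} (hE : E.Nonempty)
    {n : ℕ} (hn : E.card ≤ n) :
    ∃ (r : Setoid V) (D : ℕ), (∀ x y, r x y → G.dist x y ≤ D) ∧ (∀ x, {y | r x y}.ncard = n) ∧
      ∀ x ∈ E, ∀ y ∈ E, r x y := by
  have hn0 : 0 < n := hE.card_pos.trans_le hn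
  obtain ⟨D, hD⟩ := exists_list_isChain_mem_take hG hE
  have hlist (s : Finset V) : ∃ l : List V, l.Nodup ∧ n ∣ l.length ∧ (∀ x ∈ s, x ∈ l) ∧
      (∀ x ∈ E, x ∈ l.take E.card) ∧ l.IsChain (G.dist · · ≤ D) := by
    obtain ⟨N, hN⟩ := hD s
    obtain ⟨l, hnodup, hlen, hl⟩ := hN (n * N) (Nat.le_mul_of_pos_left N hn0)
    exact ⟨l, hnodup, ⟨N, hlen⟩, hl⟩
  choose l hnodup hdvd hl_mem hl_take hchain using hlist
  have hdist (s : Finset V) (x y : V) (h : blockSetoid (l s) n x y) : G.dist x y ≤ D * n :=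
    dist_le_mul_of_blockSetoid hG (hnodup s) (hchain s) hn0 h
  obtain ⟨r, hr⟩ := exists_setoid_of_finset (fun x ↦ finite_setOf_dist_le hG hfin x (D * n))
    (fun s ↦ blockSetoid (l s) n) hdist
  refine ⟨r, D * n, fun x y hxy ↦ ?_, fun x ↦ ?_, fun x hx y hy ↦ ?_⟩
  · obtain ⟨t, -, ht⟩ := hr {x}
    exact hdist t x y ((ht x (Finset.mem_singleton_self x) y).1 hxy)
  · obtain ⟨t, hxt, ht⟩ := hr {x}
    rw [Finset.singleton_subset_iff] at hxt
    simp only [ht x (Finset.mem_singleton_self x)]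
    exact ncard_setOf_blockSetoid (hnodup t) (hdvd t) (hl_mem t x hxt)
  · obtain ⟨t, -, ht⟩ := hr E
    have hsub := List.take_subset_take_left (l t) hn
    exact (ht x hx y).2 (blockSetoid_of_mem_take (hnodup t) (hsub (hl_take t x hx))
      (hsub (hl_take t y hy)))

section Cayley

variable {Γ : Type*} [Group Γ] {S : Set Γ}

open SimpleGraph

theorem connected_mulCayley (hS : Subgroup.closure S = ⊤) : (mulCayley S).Connected := by
  have hstep (x y s : Γ) (hs : s ∈ S) (h : y = x * s) : (mulCayley S).Reachable x y := by
    by_cases hxy : x = y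
    · exact hxy ▸ .rfl
    · exact Adj.reachable ((mulCayley_adj' S x y).2 ⟨hxy, s, hs, .inl h.symm⟩)
  have hone (x : Γ) : (mulCayley S).Reachable 1 x := by
    have hx : x ∈ Subgroup.closure S := hS ▸ Subgroup.mem_top x
    induction hx using Subgroup.closure_induction_right with
    | one => exact .rfl
    | mul_right x _ s hs ih => exact ih.trans (hstep x _ s hs rfl)
    | mul_inv_cancel x _ s hs ih => exact ih.trans (hstep _ x s hs (by simp)).symm
  exact ⟨fun x y ↦ (hone x).symm.trans (hone y)⟩

theorem finite_neighborSet_mulCayley_s18 (hS : S.Finite) (x : Γ) :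
    ((mulCayley S).neighborSet x).Finite := by
  refine ((hS.union hS.inv).smul_set (a := x)).subset fun y hy ↦
    Set.mem_smul_set_iff_inv_smul_mem.2 ?_
  simpa using ((mulCayley_adj S x y).1 hy).2

theorem dist_mulCayley_one_inv_mul_le (hS : Subgroup.closure S = ⊤) (x y : Γ) :
    (mulCayley S).dist 1 (x⁻¹ * y) ≤ (mulCayley S).dist x y := by
  have hconn := connected_mulCayley hS
  simpa using dist_map_le_mul_dist (f := (x⁻¹ * ·)) (C := 1) hconn hconn
    (fun _ _ h ↦ (dist_eq_one_iff_adj.2 (mulCayley_adj_mul_iff_right.2 h)).le) x y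

theorem exists_setoid_of_group_fg (Γ : Type*) [Group Γ] [Group.FG Γ] [Infinite Γ] {E : Finset Γ}
    (hE : E.Nonempty) {n : ℕ} (hn : E.card ≤ n) :
    ∃ (r : Setoid Γ) (K : Set Γ), K.Finite ∧ (∀ x y, r x y → x⁻¹ * y ∈ K) ∧
      (∀ x, {y | r x y}.ncard = n) ∧ ∀ x ∈ E, ∀ y ∈ E, r x y := by
  obtain ⟨S, hS, hfin⟩ := Group.fg_iff.1 ‹Group.FG Γ›
  have hconn := connected_mulCayley hS
  have hnhds := finite_neighborSet_mulCayley_s18 hfin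
  obtain ⟨r, D, hD, hr⟩ := exists_setoid_dist_le_of_connected hconn hnhds hE hn
  exact ⟨r, {x | (mulCayley S).dist 1 x ≤ D}, finite_setOf_dist_le hconn hnhds 1 D,
    fun x y h ↦ (dist_mulCayley_one_inv_mul_le hS x y).trans (hD x y h), hr⟩

end Cayley

section Transversal

variable {G : Type*} [Group G]

theorem exists_subgroup_retraction (H : Subgroup G) :
    ∃ ρ : G → H, (∀ g (h : H), ρ (g * h) = ρ g * h) ∧ ∀ h : H, ρ h = h := by
  obtain ⟨S, hS, hS_one⟩ := H.exists_isComplement_left 1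
  have hmul (g : G) (h : H) : (hS.equiv (g * h)).2 = (hS.equiv g).2 * h :=
    congrArg Prod.snd (hS.equiv_mul_right g h)
  refine ⟨fun g ↦ (hS.equiv g).2, hmul, fun h ↦ ?_⟩
  have hone : (hS.equiv 1).2 = 1 := by simp [hS.equiv_one hS_one H.one_mem]
  simpa [hone] using hmul 1 h

theorem exists_setoid_of_subgroup (H : Subgroup G) (r : Setoid H) :
    ∃ r' : Setoid G, (∀ x y, r' x y → ∃ a b, r a b ∧ x⁻¹ * y = a⁻¹ * b) ∧
      (∀ x, ∃ a, {y | r' x y}.ncard = {b | r a b}.ncard) ∧ ∀ a b : H, r a b → r' a b := by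
  obtain ⟨ρ, hρ_mul, hρ⟩ := exists_subgroup_retraction H
  have hρ_inv_mul {x y : G} (h : x⁻¹ * y ∈ H) : x⁻¹ * y = (ρ x)⁻¹ * ρ y := by
    have hρy : ρ y = ρ x * ⟨x⁻¹ * y, h⟩ := by simp [← hρ_mul]
    simp [hρy]
  let r' : Setoid G := QuotientGroup.leftRel H ⊓ r.comap ρ
  have hr' {x y : G} : r' x y ↔ x⁻¹ * y ∈ H ∧ r (ρ x) (ρ y) :=
    and_congr_left' QuotientGroup.leftRel_apply
  refine ⟨r', fun x y h ↦ ⟨ρ x, ρ y, (hr'.1 h).2, hρ_inv_mul (hr'.1 h).1⟩, fun x ↦ ⟨ρ x, ?_⟩,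
    fun a b hab ↦ hr'.2 ⟨H.mul_mem (H.inv_mem a.2) b.2, by rwa [hρ, hρ]⟩⟩
  have hclass : {y | r' x y} = (fun b ↦ x * ↑((ρ x)⁻¹ * b)) '' {b | r (ρ x) b} := by
    ext y
    constructor
    · intro h
      refine ⟨ρ y, (hr'.1 h).2, ?_⟩
      simp only [Subgroup.coe_mul, ← hρ_inv_mul (hr'.1 h).1, mul_inv_cancel_left]
    · rintro ⟨b, hb : r (ρ x) b, rfl⟩
      refine hr'.2 ⟨?_, by rwa [hρ_mul, mul_inv_cancel_left]⟩
      rw [inv_mul_cancel_left]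
      exact SetLike.coe_mem _
  rw [hclass, Set.ncard_image_of_injective _ fun b c hbc ↦ by simpa using hbc]

end Transversal

section Polytiling

theorem exists_equiv_fin_zero_eq {α : Type*} [Finite α] (a : α) :
    ∃ (k : ℕ) (hk : 0 < k) (e : Fin k ≃ α), e ⟨0, hk⟩ = a := by
  classical
  obtain ⟨k, ⟨e⟩⟩ := Finite.exists_equiv_fin α
  have hk : 0 < k := (e a).pos
  exact ⟨k, hk, e.symm.trans (Equiv.swap (e.symm ⟨0, hk⟩) a), by simp⟩

theorem exists_representatives_mem {α : Type*} (r : Setoid α) (a : α) :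
    ∃ C : Set α, a ∈ C ∧ (∀ x, ∃ c ∈ C, r c x) ∧ ∀ c ∈ C, ∀ d ∈ C, r c d → c = d := by
  classical
  let σ : Quotient r → α := Function.update Quotient.out ⟦a⟧ a
  have hσ (q : Quotient r) : ⟦σ q⟧ = q := by
    by_cases hq : q = ⟦a⟧
    · subst hq
      simp [σ]
    · simp [σ, hq]
  refine ⟨Set.range σ, ⟨⟦a⟧, by simp [σ]⟩, fun x ↦ ⟨σ ⟦x⟧, ⟨_, rfl⟩, Quotient.eq.1 (hσ _)⟩, ?_⟩
  rintro _ ⟨p, rfl⟩ _ ⟨q, rfl⟩ h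
  rw [← hσ p, ← hσ q, Quotient.sound h]

variable {G : Type*} [Group G] {r : Setoid G} {K : Finset G}

open Classical in
/-- The tile `x⁻¹ • A`, where `A` is the class of `x` under `r`, provided that it is contained in
the finite set `K`. -/
noncomputable def tile (r : Setoid G) (K : Finset G) (x : G) : Finset G :=
  {k ∈ K | r x (x * k)}

theorem tile_subset (r : Setoid G) (K : Finset G) (x : G) : tile r K x ⊆ K := by
  classical
  exact Finset.filter_subset _ _

variable (hK : ∀ x y, r x y → x⁻¹ * y ∈ K)

include hK

theorem mem_tile_iff {x y : G} : y ∈ tile r K x ↔ r x (x * y) := by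
  simpa [tile] using hK x (x * y)

theorem smul_tile_eq (x : G) : x • (tile r K x : Set G) = {y | r x y} := by
  ext y
  simp [Set.mem_smul_set_iff_inv_smul_mem, mem_tile_iff hK]

theorem card_tile_eq (x : G) : (tile r K x).card = {y | r x y}.ncard := by
  rw [← smul_tile_eq hK, Set.ncard_smul_set, Set.ncard_coe_finset]

theorem exists_polytiling_of_setoid :
    ∃ P : Polytiling G, P.T P.fst = tile r K 1 ∧ ∀ i, ∃ x, P.T i = tile r K x := by
  obtain ⟨C, hC_one, hC, hC_eq⟩ := exists_representatives_mem r 1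
  have hfin : (tile r K '' C).Finite := K.powerset.finite_toSet.subset <| by
    rintro _ ⟨x, -, rfl⟩
    exact Finset.mem_powerset.2 (tile_subset r K x)
  have := hfin.to_subtype
  obtain ⟨k, hk, e, he⟩ := exists_equiv_fin_zero_eq
    (⟨tile r K 1, Set.mem_image_of_mem _ hC_one⟩ : tile r K '' C)
  let P : Polytiling G :=
    { k := k
      k_pos := hk
      T := fun i ↦ e i
      Δ := fun i ↦ {x ∈ C | tile r K x = e i}
      one_mem := fun i ↦ by
        obtain ⟨x, -, hx⟩ := (e i).2
        rw [← hx, mem_tile_iff hK, mul_one]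
      delta_nonempty := fun i ↦ (e i).2
      covers := fun g ↦ by
        obtain ⟨c, hc, hcg⟩ := hC g
        refine ⟨e.symm ⟨_, Set.mem_image_of_mem _ hc⟩, c, ⟨hc, by simp⟩, ?_⟩
        simpa [smul_tile_eq hK] using hcg
      disj := by
        rintro i j c ⟨hc, hci⟩ d ⟨hd, hdj⟩ hne
        rw [← hci, ← hdj, smul_tile_eq hK, smul_tile_eq hK, Set.disjoint_left]
        intro z hcz hdz
        obtain rfl := hC_eq c hc d hd (r.trans hcz (r.symm hdz))
        exact hne (Prod.ext (e.injective (Subtype.ext (hci.symm.trans hdj))) rfl) }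
  refine ⟨P, congrArg Subtype.val he, fun i ↦ ?_⟩
  obtain ⟨x, -, hx⟩ := (e i).2
  exact ⟨x, hx.symm⟩

end Polytiling

theorem exists_setoid_of_infinite_closure {G : Type*} [Group G] [DecidableEq G] {F₀ : Finset G}
    (hF₀ : (Subgroup.closure (F₀ : Set G) : Set G).Infinite) (F : Finset G) {n : ℕ}
    (hn : (insert 1 F).card ≤ n) :
    ∃ (r : Setoid G) (K : Finset G), (∀ x y, r x y → x⁻¹ * y ∈ K) ∧
      (∀ x, {y | r x y}.ncard = n) ∧ ∀ x ∈ F, r 1 x := by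
  classical
  let H : Subgroup G := Subgroup.closure ↑(F₀ ∪ F)
  have hinf : Infinite H := by
    refine (Set.Infinite.mono ?_ hF₀).to_subtype
    exact Subgroup.closure_mono (Finset.coe_subset.2 Finset.subset_union_left)
  let E : Finset H := (insert 1 F).subtype (· ∈ H)
  have hE_one : 1 ∈ E := by simp [E]
  have hE_card : E.card ≤ n := by
    rw [Finset.card_subtype]
    exact (Finset.card_filter_le _ _).trans hn
  obtain ⟨r, K, hK, hr, hr_card, hr_E⟩ := exists_setoid_of_group_fg H ⟨1, hE_one⟩ hE_card
  obtain ⟨r', hr', hr'_card, hr'_of⟩ := exists_setoid_of_subgroup H r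
  refine ⟨r', (hK.image Subtype.val).toFinset, fun x y hxy ↦ ?_, fun x ↦ ?_, fun x hx ↦ ?_⟩
  · obtain ⟨a, b, hab, h⟩ := hr' x y hxy
    rw [h, Set.Finite.mem_toFinset]
    exact Set.mem_image_of_mem Subtype.val (hr a b hab)
  · obtain ⟨a, ha⟩ := hr'_card x
    exact ha.trans (hr_card a)
  · have hxH : x ∈ H := Subgroup.subset_closure (by simp [hx])
    exact hr'_of 1 ⟨x, hxH⟩ (hr_E _ hE_one _ (by simp [E, hx]))

theorem fair_polytiles_of_all_sizes_general {G : Type*} [Group G] [DecidableEq G]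
    (hnlf : ¬ ∀ F : Finset G, ((Subgroup.closure (F : Set G) : Subgroup G) : Set G).Finite)
    (F : Finset G) {n : ℕ} (hn : (insert 1 F).card ≤ n) :
    ∃ P : Polytiling G, P.Fair ∧ (F : Set G) ⊆ ((P.T P.fst : Finset G) : Set G) ∧
      (P.T P.fst).card = n := by
  obtain ⟨F₀, hF₀⟩ := not_forall.1 hnlf
  obtain ⟨r, K, hK, hr_card, hr_F⟩ := exists_setoid_of_infinite_closure hF₀ F hn
  obtain ⟨P, hP_fst, hP⟩ := exists_polytiling_of_setoid hK
  have hcard (i : Fin P.k) : (P.T i).card = n := by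
    obtain ⟨x, hx⟩ := hP i
    rw [hx, card_tile_eq hK, hr_card]
  refine ⟨P, fun i j ↦ (hcard i).trans (hcard j).symm, fun x hx ↦ ?_, hcard _⟩
  rw [hP_fst, Finset.mem_coe, mem_tile_iff hK, one_mul]
  exact hr_F x hx

/-- In a countable non-locally-finite group there are fair polytiles whose tiles have any
prescribed cardinality `n ≥ 1`; moreover any finite set `F` is contained in the first tile
of a fair polytile of any sufficiently large prescribed cardinality. -/
theorem fair_polytiles_of_all_sizes (G : Type*) [Group G] [Countable G]
    (hnlf : ¬ ∀ F : Finset G, ((Subgroup.closure (F : Set G) : Subgroup G) : Set G).Finite) :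
    (∀ n : ℕ, 1 ≤ n → ∃ P : Polytiling G, P.Fair ∧ (P.T P.fst).card = n) ∧
    (∀ F : Finset G, ∃ N : ℕ, ∀ n : ℕ, N ≤ n →
      ∃ P : Polytiling G, P.Fair ∧ (F : Set G) ⊆ ((P.T P.fst : Finset G) : Set G) ∧
        (P.T P.fst).card = n) := by
  classical
  exact ⟨fun n hn ↦ (fair_polytiles_of_all_sizes_general hnlf ∅ (by simpa)).imp
    fun _ h ↦ ⟨h.1, h.2.2⟩, fun F ↦ ⟨_, fun _ ↦ fair_polytiles_of_all_sizes_general hnlf F⟩⟩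
end
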